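/- Let ρ be a computable, shift-invariant, ergodic Borel probability measure on 2^ℕ, and let μ be a Borel probability measure with μ ≪_ML ρ. Then lim_n K(μ↾n)/n and lim_n C(μ↾n)/n both exist and both equal the entropy H(ρ). -/

import Mathlib

open MeasureTheory Filter

/-- Cantor space: the space of infinite binary sequences. -/
abbrev Cantor : Type := ℕ → Bool

/-- Finite binary strings. -/
abbrev BStr : Type := List Bool

/-- The cylinder set of sequences extending the string `x`. -/
def cyl (x : BStr) : Set Cantor := {Z | ∀ i : Fin x.length, Z i.1 = x.get i}

/-- The string of the first `n` bits of `Z`. -/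
def seg (Z : Cantor) (n : ℕ) : BStr := List.ofFn fun i : Fin n => Z i.1

/-- `lam` is the uniform (fair-coin product) measure: every cylinder `[x]`
has measure `2^{-|x|}`. -/
def IsUniform (lam : Measure Cantor) : Prop :=
  ∀ x : BStr, lam (cyl x) = (2 : ENNReal)⁻¹ ^ x.length

/-- `(G_m)` is a Martin-Löf test with respect to the measure `ρ`:
the sets `G_m` are uniformly effectively open and `ρ (G_m) ≤ 2^{-m}`. -/
def IsMLTest (ρ : Measure Cantor) (G : ℕ → Set Cantor) : Prop :=
  (∃ σ : ℕ → ℕ → BStr, Computable₂ σ ∧ ∀ m, G m = ⋃ i, cyl (σ m i)) ∧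
  ∀ m, ρ (G m) ≤ (2 : ENNReal)⁻¹ ^ m

/-- `μ` is Martin-Löf absolutely continuous in `ρ`: `inf_m μ(G_m) = 0`
for every `ρ`-Martin-Löf test `(G_m)`. -/
def MLAC (μ ρ : Measure Cantor) : Prop :=
  ∀ G : ℕ → Set Cantor, IsMLTest ρ G → ⨅ m, μ (G m) = 0

/-- `Z` is Martin-Löf random with respect to `lam`. -/
def MLRandom (lam : Measure Cantor) (Z : Cantor) : Prop :=
  ∀ G : ℕ → Set Cantor, IsMLTest lam G → Z ∉ ⋂ m, G m

/-- `ρ` is a computable measure: `ρ [x]` is a computable real, uniformly in `x`. -/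
def ComputableMeasure (ρ : Measure Cantor) : Prop :=
  ∃ q : BStr → ℕ → ℚ, Computable₂ q ∧
    ∀ x k, |(q x k : ℝ) - (ρ (cyl x)).toReal| ≤ (2 : ℝ)⁻¹ ^ k

/-- `U` is a universal plain machine. -/
def UniversalPlain (U : BStr →. BStr) : Prop :=
  Partrec U ∧ ∀ M : BStr →. BStr, Partrec M →
    ∃ c : ℕ, ∀ p x, x ∈ M p → ∃ q : BStr, q.length ≤ p.length + c ∧ x ∈ U q

/-- The domain of `M` is an antichain under the prefix relation. -/
def PrefixFreeDom (M : BStr →. BStr) : Prop :=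
  ∀ p q : BStr, (M p).Dom → (M q).Dom → p <+: q → p = q

/-- `U` is a universal prefix-free machine. -/
def UniversalPrefixFree (U : BStr →. BStr) : Prop :=
  Partrec U ∧ PrefixFreeDom U ∧
  ∀ M : BStr →. BStr, Partrec M → PrefixFreeDom M →
    ∃ c : ℕ, ∀ p x, x ∈ M p → ∃ q : BStr, q.length ≤ p.length + c ∧ x ∈ U q

/-- Kolmogorov complexity of the string `x` with respect to the machine `U`:
the minimal length of a `U`-description of `x`. -/
noncomputable def cpx (U : BStr →. BStr) (x : BStr) : ℕ :=
  sInf {n | ∃ q : BStr, q.length = n ∧ x ∈ U q}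

/-- A natural number `n` identified with the string `0^n`. -/
def numStr (n : ℕ) : BStr := List.replicate n false

/-- Complexity of the natural number `n` (i.e., of the string `0^n`). -/
noncomputable def cpxN (U : BStr →. BStr) (n : ℕ) : ℕ := cpx U (numStr n)

/-- The `μ`-average complexity of the strings of length `n`:
`Σ_{|x|=n} cpx(x) · μ[x]`. -/
noncomputable def avgCpx (U : BStr →. BStr) (μ : Measure Cantor) (n : ℕ) : ℝ :=
  ∑ v : Fin n → Bool, (cpx U (List.ofFn v) : ℝ) * (μ (cyl (List.ofFn v))).toReal

/-- A measure `μ` is trivial for the complexity given by the machine `U`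
(e.g. K-trivial when `U` is the universal prefix-free machine, C-trivial
when `U` is the universal plain machine). -/
def MeasTrivial (U : BStr →. BStr) (μ : Measure Cantor) : Prop :=
  ∃ c : ℝ, ∀ n : ℕ, avgCpx U μ n ≤ (cpxN U n : ℝ) + c

/-- The shift operator on Cantor space. -/
def shift (Z : Cantor) : Cantor := fun n => Z (n + 1)

/-- `H_n(ρ) = -(1/n) Σ_{|w|=n} ρ[w] log₂ ρ[w]`, the `n`-th entropy of `ρ`. -/
noncomputable def entropyAt (ρ : Measure Cantor) (n : ℕ) : ℝ :=
  -(1 / (n : ℝ)) * ∑ v : Fin n → Bool,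
    (ρ (cyl (List.ofFn v))).toReal * Real.logb 2 (ρ (cyl (List.ofFn v))).toReal

/-!
The proof rests on an effective ergodic argument in the style of Kučera: for computable ergodic `ρ`
the mean ergodic theorem has a computable rate, so if `G` is effectively open with `ρ G < 1`, then
asking again and again that all shifts up to a suitable time lie in `G` shrinks the measure
geometrically. This yields a Martin-Löf test, and hence `μ`-almost every sequence has a shift
outside `G` whenever `μ ≪_ML ρ`. Since `C(x) / |x|` is asymptotically insensitive to a finite
shift, it remains to find, on both sides of the entropy `s`, such a `G` capturing the sequences
with exceptional complexity.

*Lower bound.* Let `t < s`. At most `2 · 2^(t n)` strings of length `n` have descriptions shorter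
than `t n`. If almost every sequence had arbitrarily long prefixes of this kind, cutting orbits at
these prefixes would parse typical words into compressible blocks, and Gibbs' inequality for the
resulting subprobability weights would give entropy at most `t`.

*Upper bound.* Let `m > s`. Charge each bit its cost given the `k` bits following it, under a
rounded and smoothed conditional probability. The total cost of a prefix is a Birkhoff sum of mean
less than `m`, so it cannot be infinitely often above `m n` with probability one. By Kraft's
inequality few strings have small cost, so each of them is described by its length and its index in
that list.

Thus `C(Z↾n) / n → s` for `μ`-almost every `Z`. Dominated convergence, with `C(x) ≤ |x| + c`, gives
the averages, and `K` differs from `C` by at most `O(√n)` through a self-delimiting code.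
-/

attribute [fun_prop] Computable Computable.id Computable.const Computable.pair Computable.comp

section ComputableFunctions

variable {α β γ : Type*} [Primcodable α] [Primcodable β] [Primcodable γ]

@[fun_prop]
theorem computable_fst {f : α → β × γ} (hf : Computable f) : Computable fun a => (f a).1 :=
  Computable.fst.comp hf

@[fun_prop]
theorem computable_snd {f : α → β × γ} (hf : Computable f) : Computable fun a => (f a).2 :=
  Computable.snd.comp hf

@[fun_prop]
theorem computable_add {f g : α → ℕ} (hf : Computable f) (hg : Computable g) :
    Computable fun a => f a + g a :=
  Primrec.nat_add.to_comp.comp hf hg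

@[fun_prop]
theorem computable_sub {f g : α → ℕ} (hf : Computable f) (hg : Computable g) :
    Computable fun a => f a - g a :=
  Primrec.nat_sub.to_comp.comp hf hg

@[fun_prop]
theorem computable_mul {f g : α → ℕ} (hf : Computable f) (hg : Computable g) :
    Computable fun a => f a * g a :=
  Primrec.nat_mul.to_comp.comp hf hg

@[fun_prop]
theorem computable_div {f g : α → ℕ} (hf : Computable f) (hg : Computable g) :
    Computable fun a => f a / g a :=
  Primrec.nat_div.to_comp.comp hf hg

@[fun_prop]
theorem computable_mod {f g : α → ℕ} (hf : Computable f) (hg : Computable g) :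
    Computable fun a => f a % g a :=
  Primrec.nat_mod.to_comp.comp hf hg

@[fun_prop]
theorem computable_unpair {f : α → ℕ} (hf : Computable f) : Computable fun a => (f a).unpair :=
  Computable.unpair.comp hf

@[fun_prop]
theorem computable_encode {f : α → β} (hf : Computable f) :
    Computable fun a => Encodable.encode (f a) :=
  Computable.encode.comp hf

@[fun_prop]
theorem computable_take {f : α → ℕ} {g : α → List β} (hf : Computable f) (hg : Computable g) :
    Computable fun a => (g a).take (f a) :=
  Primrec.list_take.to_comp.comp hf hg

@[fun_prop]
theorem computable_drop {f : α → ℕ} {g : α → List β} (hf : Computable f) (hg : Computable g) :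
    Computable fun a => (g a).drop (f a) :=
  Primrec.list_drop.to_comp.comp hf hg

@[fun_prop]
theorem computable_length {g : α → List β} (hg : Computable g) :
    Computable fun a => (g a).length :=
  Computable.list_length.comp hg

@[fun_prop]
theorem computable_getD {f : α → ℕ} {g : α → List β} {d : β} (hf : Computable f)
    (hg : Computable g) : Computable fun a => (g a).getD (f a) d :=
  (Primrec.list_getD d).to_comp.comp hg hf

@[fun_prop]
theorem computable_decide_le {f g : α → ℕ} (hf : Computable f) (hg : Computable g) :
    Computable fun a => decide (f a ≤ g a) :=
  Primrec.nat_le.decide.to_comp.comp hf hg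

@[fun_prop]
theorem computable_decide_lt {f g : α → ℕ} (hf : Computable f) (hg : Computable g) :
    Computable fun a => decide (f a < g a) :=
  Primrec.nat_lt.decide.to_comp.comp hf hg

@[fun_prop]
theorem computable_decide_eq [DecidableEq β] {f g : α → β} (hf : Computable f)
    (hg : Computable g) : Computable fun a => decide (f a = g a) :=
  Primrec.eq.decide.to_comp.comp hf hg

section Predicates

variable {P Q : α → Prop} [DecidablePred P] [DecidablePred Q]

@[fun_prop]
theorem computable_decide_and (hP : Computable fun a => decide (P a))
    (hQ : Computable fun a => decide (Q a)) : Computable fun a => decide (P a ∧ Q a) :=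
  (Primrec.and.to_comp.comp hP hQ).of_eq fun _ => (Bool.decide_and _ _).symm

@[fun_prop]
theorem computable_decide_not (hP : Computable fun a => decide (P a)) :
    Computable fun a => decide ¬P a :=
  (Primrec.not.to_comp.comp hP).of_eq fun _ => decide_not.symm

@[fun_prop]
theorem computable_ite {f g : α → β} (hP : Computable fun a => decide (P a))
    (hf : Computable f) (hg : Computable g) : Computable fun a => if P a then f a else g a :=
  (Computable.cond hP hf hg).of_eq fun a => by rw [Bool.cond_decide]

end Predicates

@[fun_prop]
theorem computable_pow {f g : α → ℕ} (hf : Computable f) (hg : Computable g) :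
    Computable fun a => f a ^ g a := by
  have h : Computable₂ fun (a : α) (q : ℕ × ℕ) => q.2 * f a := by
    change Computable fun p : α × ℕ × ℕ => p.2.2 * f p.1
    fun_prop
  refine (Computable.nat_rec hg (Computable.const 1) h).of_eq fun a => ?_
  induction g a with
  | zero => rfl
  | succ n ih => exact (congrArg (· * f a) ih).trans (pow_succ _ _).symm

@[fun_prop]
theorem computable_sum_range {f : α → ℕ → ℕ} {g : α → ℕ}
    (hf : Computable fun q : α × ℕ => f q.1 q.2) (hg : Computable g) :
    Computable fun a => ∑ i ∈ Finset.range (g a), f a i := by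
  have h : Computable₂ fun (a : α) (q : ℕ × ℕ) => q.2 + f a q.1 := by
    change Computable fun p : α × ℕ × ℕ => p.2.2 + f p.1 p.2.1
    fun_prop
  refine (Computable.nat_rec hg (Computable.const 0) h).of_eq fun a => ?_
  induction g a with
  | zero => rfl
  | succ n ih => exact (congrArg (· + f a n) ih).trans (Finset.sum_range_succ _ _).symm

@[fun_prop]
theorem computable_decide_forall_lt {P : α → ℕ → Prop} [∀ a i, Decidable (P a i)] {g : α → ℕ}
    (hP : Computable fun q : α × ℕ => decide (P q.1 q.2)) (hg : Computable g) :
    Computable fun a => decide (∀ i < g a, P a i) := by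
  have h : Computable fun a => decide (∑ i ∈ Finset.range (g a), (if P a i then 0 else 1) = 0) := by
    fun_prop
  exact h.of_eq fun a => by simp [Finset.sum_eq_zero_iff]

@[fun_prop]
theorem computable_decide_exists_lt {P : α → ℕ → Prop} [∀ a i, Decidable (P a i)] {g : α → ℕ}
    (hP : Computable fun q : α × ℕ => decide (P q.1 q.2)) (hg : Computable g) :
    Computable fun a => decide (∃ i < g a, P a i) := by
  have h : Computable fun a => decide (¬∀ i < g a, ¬P a i) := by fun_prop
  exact h.of_eq fun a => by simp

theorem exists_computable_choice {P : α → ℕ → Prop} [∀ a n, Decidable (P a n)]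
    (hP : Computable fun q : α × ℕ => decide (P q.1 q.2)) (h : ∀ a, ∃ n, P a n) :
    ∃ f : α → ℕ, Computable f ∧ ∀ a, P a (f a) := by
  have hfind : Partrec fun a => Nat.rfind fun n => Part.some (decide (P a n)) :=
    Partrec.rfind hP.partrec
  refine ⟨fun a => Nat.find (h a), hfind.of_eq_tot fun a => ?_, fun a => Nat.find_spec (h a)⟩
  exact Nat.mem_rfind.2 ⟨by simpa using Nat.find_spec (h a), fun {m} hm => by
    simpa using Nat.find_min (h a) hm⟩

end ComputableFunctions

section Words

/-- All strings of length `n`, in lexicographic order. The list form of `words n` is what the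
computability proofs work with. -/
def bitStrings : ℕ → List BStr
  | 0 => [[]]
  | n + 1 => (bitStrings n).map (List.cons false) ++ (bitStrings n).map (List.cons true)

@[simp]
theorem mem_bitStrings {n : ℕ} {x : BStr} : x ∈ bitStrings n ↔ x.length = n := by
  induction n generalizing x with
  | zero => simp [bitStrings]
  | succ n ih => rcases x with _ | ⟨_ | _, x⟩ <;> simp [bitStrings, ih]

@[simp]
theorem length_bitStrings (n : ℕ) : (bitStrings n).length = 2 ^ n := by
  induction n with
  | zero => rfl
  | succ n ih => simp [bitStrings, ih, pow_succ, mul_two]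

theorem nodup_bitStrings (n : ℕ) : (bitStrings n).Nodup := by
  induction n with
  | zero => simp [bitStrings]
  | succ n ih =>
    refine (ih.map List.cons_injective).append (ih.map List.cons_injective) fun x hf ht => ?_
    obtain ⟨y, -, rfl⟩ := List.mem_map.1 hf
    simp at ht

/-- The finite set of strings of length `n`, the index set of the sums over `{w : |w| = n}`. -/
def words (n : ℕ) : Finset BStr := (bitStrings n).toFinset

@[simp]
theorem mem_words {n : ℕ} {x : BStr} : x ∈ words n ↔ x.length = n := by
  simp [words]

@[simp]
theorem card_words (n : ℕ) : (words n).card = 2 ^ n := by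
  rw [words, List.toFinset_card_of_nodup (nodup_bitStrings n), length_bitStrings]

variable {M : Type*} [AddCommMonoid M]

theorem sum_map_bitStrings (n : ℕ) (f : BStr → M) :
    ((bitStrings n).map f).sum = ∑ x ∈ words n, f x :=
  (List.sum_toFinset f (nodup_bitStrings n)).symm

theorem sum_ofFn_eq_sum_words (n : ℕ) (f : BStr → M) :
    ∑ v : Fin n → Bool, f (List.ofFn v) = ∑ x ∈ words n, f x := by
  refine Finset.sum_bij (fun v _ => List.ofFn v) (by simp)
    (fun v _ w _ h => List.ofFn_injective h) (fun x hx => ?_) fun _ _ => rfl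
  obtain rfl := mem_words.1 hx
  exact ⟨x.get, Finset.mem_univ _, List.ofFn_get x⟩

theorem sum_words_zero (f : BStr → M) : ∑ x ∈ words 0, f x = f [] := by
  simp [← sum_map_bitStrings, bitStrings]

theorem sum_words_succ (n : ℕ) (f : BStr → M) :
    ∑ x ∈ words (n + 1), f x = ∑ x ∈ words n, (f (false :: x) + f (true :: x)) := by
  simp [Finset.sum_add_distrib, ← sum_map_bitStrings, bitStrings, Function.comp_def]

theorem sum_words_add (m n : ℕ) (f : BStr → M) :
    ∑ x ∈ words (m + n), f x = ∑ y ∈ words m, ∑ z ∈ words n, f (y ++ z) := by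
  induction m generalizing f with
  | zero => simp [sum_words_zero]
  | succ m ih =>
    simp [Nat.add_right_comm m 1 n, sum_words_succ, ih, Finset.sum_add_distrib]

end Words

section ComputableLists

variable {α β : Type*} [Primcodable α] [Primcodable β]

@[fun_prop]
theorem computable_append {f g : α → List β} (hf : Computable f) (hg : Computable g) :
    Computable fun a => f a ++ g a :=
  Computable.list_append.comp hf hg

@[fun_prop]
theorem computable_cons {f : α → β} {g : α → List β} (hf : Computable f) (hg : Computable g) :
    Computable fun a => f a :: g a :=
  Computable.list_cons.comp hf hg

@[fun_prop]
theorem computable_idxOf [BEq β] [LawfulBEq β] {f : α → β} {g : α → List β} (hf : Computable f)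
    (hg : Computable g) : Computable fun a => (g a).idxOf (f a) := by
  classical
  convert (Primrec.list_idxOf (α := β)).to_comp.comp hf hg

@[fun_prop]
theorem computable_filter {P : β → Prop} [DecidablePred P] [Inhabited β] {g : α → List β}
    (hP : Computable fun b => decide (P b)) (hg : Computable g) :
    Computable fun a => (g a).filter P := by
  have hP' : Computable fun q : α × ℕ × List β => decide (P ((g q.1).getD q.2.1 default)) :=
    hP.comp (by fun_prop)
  have h : Computable₂ fun (a : α) (q : ℕ × List β) =>
      if P ((g a).getD q.1 default) then q.2 ++ [(g a).getD q.1 default] else q.2 := by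
    change Computable fun q : α × ℕ × List β =>
      if P ((g q.1).getD q.2.1 default) then q.2.2 ++ [(g q.1).getD q.2.1 default] else q.2.2
    fun_prop
  refine (Computable.nat_rec (computable_length hg) (Computable.const []) h).of_eq fun a => ?_
  suffices ∀ n ≤ (g a).length, Nat.rec [] (fun i l => if P ((g a).getD i default) then
      l ++ [(g a).getD i default] else l) n = ((g a).take n).filter P by
    simpa using this _ le_rfl
  intro n hn
  induction n with
  | zero => simp
  | succ n ih =>
    have hn' : n < (g a).length := hn
    simp only [ih hn'.le, List.getD_eq_getElem _ _ hn', List.take_succ_eq_append_getElem hn',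
      List.filter_append]
    split_ifs with h <;> simp [h]

@[fun_prop]
theorem computable_sum_map [Inhabited β] {f : α → β → ℕ} {l : α → List β}
    (hf : Computable fun q : α × β => f q.1 q.2) (hl : Computable l) :
    Computable fun a => ((l a).map (f a)).sum := by
  have h : Computable fun a => ∑ i ∈ Finset.range (l a).length, f a ((l a).getD i default) := by
    fun_prop
  refine h.of_eq fun a => ?_
  simp [Finset.sum_range, ← Fin.sum_univ_fun_getElem]

@[fun_prop]
theorem computable_bitStrings {g : α → ℕ} (hg : Computable g) :
    Computable fun a => bitStrings (g a) := by
  have h : Primrec fun n => Nat.rec (motive := fun _ => List BStr) [[]]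
      (fun _ l => l.map (List.cons false) ++ l.map (List.cons true)) n :=
    Primrec.nat_rec₁ _ (Primrec.list_append.comp
      (Primrec.list_map .snd (Primrec.list_cons.comp (.const _) .snd).to₂)
      (Primrec.list_map .snd (Primrec.list_cons.comp (.const _) .snd).to₂))
  refine (h.of_eq fun n => ?_).to_comp.comp hg
  induction n with
  | zero => rfl
  | succ n ih => simp only [ih, bitStrings]

@[fun_prop]
theorem computable_sum_words {f : α → BStr → ℕ} {g : α → ℕ}
    (hf : Computable fun q : α × BStr => f q.1 q.2) (hg : Computable g) :
    Computable fun a => ∑ x ∈ words (g a), f a x := by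
  simp only [← sum_map_bitStrings]
  fun_prop

end ComputableLists

section ComputableRationals

theorem computable_count {P : ℕ → Prop} [DecidablePred P]
    (hP : Computable fun n => decide (P n)) : Computable (Nat.count P) := by
  have h : Computable fun n => ∑ i ∈ Finset.range n, if P i then 1 else 0 := by
    have hP' : Computable fun q : ℕ × ℕ => decide (P q.2) := hP.comp Computable.snd
    fun_prop
  exact h.of_eq fun n => by rw [Nat.count_eq_card_filter_range, Finset.card_filter]

-- The library's `Primcodable ℚ` numbers the rationals consecutively, so the original code of `r`
-- is recovered by searching for the code with the right rank in the range of the original encoding.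
open Encodable in
theorem computable_encode_of_ofEncodableOfInfinite {α : Type*} [E : Encodable α] [Infinite α]
    {P : ℕ → Prop} [DecidablePred P] (hP : Computable fun n => decide (P n))
    (hrange : ∀ n, P n ↔ n ∈ Set.range (encode : α → ℕ)) :
    @Computable α ℕ (@Primcodable.ofDenumerable α (Denumerable.ofEncodableOfInfinite α)) _
      (@encode α E) := by
  let F := @Primcodable.ofDenumerable α (Denumerable.ofEncodableOfInfinite α)
  have hcode (a : α) : @encode α F.toEncodable a = Nat.count P (@encode α E a) := by
    have h : @encode α F.toEncodable a = (List.range (@encode α E a)).countP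
        fun m => @decide (m ∈ Set.range (@encode α E)) (decidableRangeEncode α m) := rfl
    rw [h, Nat.count]
    congr 1
    ext m
    simp [hrange]
  have hF : Computable fun a => @encode α F.toEncodable a := Computable.encode
  have hcount := computable_count hP
  have hP' : Computable fun q : α × ℕ => decide (P q.2) := hP.comp Computable.snd
  obtain ⟨f, hf, hf'⟩ := exists_computable_choice
    (P := fun a n => P n ∧ Nat.count P n = @encode α F.toEncodable a) (by
      refine computable_decide_and hP' (computable_decide_eq ?_ ?_)
      · exact hcount.comp Computable.snd
      · exact hF.comp Computable.fst)
    fun a => ⟨@encode α E a, (hrange _).2 ⟨a, rfl⟩, (hcode a).symm⟩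
  exact hf.of_eq fun a =>
    Nat.count_injective (hf' a).1 ((hrange _).2 ⟨a, rfl⟩) ((hf' a).2.trans (hcode a))

theorem encode_int_add_one_div_two (z : ℤ) : (Encodable.encode z + 1) / 2 = z.natAbs := by
  rcases z with n | n
  · change (2 * n + 1) / 2 = n
    lia
  · change (2 * n + 1 + 1) / 2 = n + 1
    lia

theorem coprime_iff_not_exists_mod_eq_zero {m n : ℕ} (hn : 0 < n) :
    m.Coprime n ↔ ¬∃ d < n + 1, 1 < d ∧ m % d = 0 ∧ n % d = 0 := by
  constructor
  · rintro h ⟨d, -, hd, hm, hn⟩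
    exact hd.ne' (Nat.eq_one_of_dvd_coprimes h (Nat.dvd_of_mod_eq_zero hm)
      (Nat.dvd_of_mod_eq_zero hn))
  · intro h
    by_contra hmn
    have hpos := Nat.gcd_pos_of_pos_right m hn
    exact h ⟨m.gcd n, Nat.lt_succ_of_le (Nat.gcd_le_right m hn), by unfold Nat.Coprime at hmn; lia,
      Nat.mod_eq_zero_of_dvd (m.gcd_dvd_left n), Nat.mod_eq_zero_of_dvd (m.gcd_dvd_right n)⟩

theorem computable_decide_coprime {α : Type*} [Primcodable α] {f g : α → ℕ} (hf : Computable f)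
    (hg : Computable g) : Computable fun a => decide (0 < g a ∧ (f a).Coprime (g a)) := by
  have hpos : Computable fun a => decide (0 < g a) := by fun_prop
  have hmod : Computable fun q : α × ℕ =>
      decide (1 < q.2 ∧ f q.1 % q.2 = 0 ∧ g q.1 % q.2 = 0) := by
    refine computable_decide_and ?_ (computable_decide_and ?_ ?_) <;> fun_prop
  exact (computable_decide_and hpos (computable_decide_not (computable_decide_exists_lt hmod
    (computable_add hg (Computable.const 1))))).of_eq fun a =>
      decide_eq_decide.2 (and_congr_right fun h => (coprime_iff_not_exists_mod_eq_zero h).symm)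

theorem mem_range_encode_rat (m : ℕ) :
    0 < m.unpair.2 ∧ ((m.unpair.1 + 1) / 2).Coprime m.unpair.2 ↔
      m ∈ Set.range (@Encodable.encode ℚ Rat.instEncodable) := by
  obtain ⟨z, hz⟩ : ∃ z : ℤ, Encodable.encode z = m.unpair.1 :=
    ⟨Denumerable.ofNat ℤ _, Denumerable.encode_ofNat _⟩
  have hcode (r : ℚ) : @Encodable.encode ℚ Rat.instEncodable r =
    Nat.pair (Encodable.encode r.num) r.den := rfl
  constructor
  · rintro ⟨hpos, hcop⟩
    rw [← hz, encode_int_add_one_div_two] at hcop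
    exact ⟨⟨z, m.unpair.2, hpos.ne', hcop⟩, by rw [hcode, hz, Nat.pair_unpair]⟩
  · rintro ⟨r, rfl⟩
    simp only [hcode, Nat.unpair_pair, encode_int_add_one_div_two]
    exact ⟨r.den_pos, r.reduced⟩

theorem computable_encode_rat :
    Computable fun r : ℚ => @Encodable.encode ℚ Rat.instEncodable r :=
  computable_encode_of_ofEncodableOfInfinite (E := Rat.instEncodable)
    (computable_decide_coprime (computable_div (computable_add (computable_fst Computable.unpair)
      (Computable.const 1)) (Computable.const 2)) (computable_snd Computable.unpair))
    mem_range_encode_rat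

theorem computable_rat_den : Computable Rat.den := by
  have h : Computable fun r : ℚ => (@Encodable.encode ℚ Rat.instEncodable r).unpair.2 :=
    computable_snd (computable_unpair computable_encode_rat)
  exact h.of_eq fun r => congrArg Prod.snd (Nat.unpair_pair _ _)

theorem computable_rat_natAbs_num : Computable fun r : ℚ => r.num.natAbs := by
  have h : Computable fun r : ℚ =>
      ((@Encodable.encode ℚ Rat.instEncodable r).unpair.1 + 1) / 2 :=
    computable_div (computable_add (computable_fst (computable_unpair computable_encode_rat))
      (Computable.const 1)) (Computable.const 2)
  exact h.of_eq fun r => by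
    rw [← encode_int_add_one_div_two]
    exact congrArg (fun p : ℕ × ℕ => (p.1 + 1) / 2) (Nat.unpair_pair _ _)

end ComputableRationals

section ComputableReals

variable {α β : Type*} [Primcodable α] [Primcodable β]

/-- A nonnegative real-valued function is computable if the numerators of dyadic approximations of
its values are computable, uniformly in the argument and in the precision. -/
def ComputableReal (f : α → ℝ) : Prop :=
  ∃ a : α × ℕ → ℕ, Computable a ∧ ∀ x k, |(a (x, k) / 2 ^ k : ℝ) - f x| ≤ 2⁻¹ ^ k

theorem abs_div_sub_div_le_of_round (p q k : ℕ) :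
    |(((2 * 2 ^ k * p + q) / (2 * q) : ℕ) / 2 ^ k : ℝ) - p / q| ≤ 2⁻¹ ^ (k + 1) := by
  rcases q.eq_zero_or_pos with rfl | hq
  · simp
  have hround : |(((2 * 2 ^ k * p + q) / (2 * q) : ℕ) : ℝ) - 2 ^ k * p / q| ≤ 1 / 2 := by
    rw [abs_le]
    have hle := Nat.div_mul_le_self (2 * 2 ^ k * p + q) (2 * q)
    have hlt := Nat.lt_div_mul_add (a := 2 * 2 ^ k * p + q) (Nat.mul_pos two_pos hq)
    rw [← Nat.cast_le (α := ℝ)] at hle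
    rw [← Nat.cast_lt (α := ℝ)] at hlt
    push_cast at hle hlt
    have hq' : (0 : ℝ) < q := mod_cast hq
    have hmul : (2 ^ k * p / q : ℝ) * q = 2 ^ k * p := div_mul_cancel₀ _ hq'.ne'
    constructor
    · exact le_of_mul_le_mul_right (by linarith) hq'
    · exact le_of_mul_le_mul_right (by linarith) hq'
  calc _ = |(((2 * 2 ^ k * p + q) / (2 * q) : ℕ) : ℝ) - 2 ^ k * p / q| / |2 ^ k| := by
        rw [← abs_div]
        congr 1
        field_simp
    _ = |(((2 * 2 ^ k * p + q) / (2 * q) : ℕ) : ℝ) - 2 ^ k * p / q| / 2 ^ k := by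
        rw [abs_of_pos (by positivity : (0 : ℝ) < 2 ^ k)]
    _ ≤ 1 / 2 / 2 ^ k := by gcongr
    _ = 2⁻¹ ^ (k + 1) := by rw [pow_succ, inv_pow]; ring

theorem computableReal_of_approx {f : α → ℝ} {p q : α × ℕ → ℕ} {c : α → ℕ} (hp : Computable p)
    (hq : Computable q) (hc : Computable c)
    (h : ∀ x k, |(p (x, k) / q (x, k) : ℝ) - f x| ≤ 2 ^ c x * 2⁻¹ ^ k) : ComputableReal f := by
  let j : α × ℕ → α × ℕ := fun y => (y.1, y.2 + 1 + c y.1)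
  refine ⟨fun y => (2 * 2 ^ y.2 * p (j y) + q (j y)) / (2 * q (j y)), by fun_prop, fun x k => ?_⟩
  have hprec : (2 : ℝ) ^ c x * 2⁻¹ ^ (k + 1 + c x) = 2⁻¹ ^ (k + 1) := by
    rw [pow_add 2⁻¹ (k + 1), mul_left_comm, ← mul_pow, mul_inv_cancel₀ two_ne_zero, one_pow,
      mul_one]
  calc _ ≤ _ := abs_sub_le _ (p (j (x, k)) / q (j (x, k)) : ℝ) _
    _ ≤ 2⁻¹ ^ (k + 1) + 2⁻¹ ^ (k + 1) :=
        add_le_add (abs_div_sub_div_le_of_round _ _ _) ((h x _).trans_eq hprec)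
    _ = 2⁻¹ ^ k := by rw [pow_succ]; ring

theorem ComputableReal.comp {f : β → ℝ} {g : α → β} (hf : ComputableReal f) (hg : Computable g) :
    ComputableReal fun x => f (g x) := by
  obtain ⟨a, ha, h⟩ := hf
  exact ⟨fun y => a (g y.1, y.2), by fun_prop, fun x => h (g x)⟩

theorem computableReal_natCast {f : α → ℕ} (hf : Computable f) :
    ComputableReal fun x => (f x : ℝ) :=
  computableReal_of_approx (p := fun y => f y.1) (q := fun _ => 1) (c := fun _ => 0) (by fun_prop)
    (by fun_prop) (by fun_prop) fun x k => by simp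

theorem computableReal_inv_two_pow {f : α → ℕ} (hf : Computable f) :
    ComputableReal fun x => (2 : ℝ)⁻¹ ^ f x :=
  computableReal_of_approx (p := fun _ => 1) (q := fun y => 2 ^ f y.1) (c := fun _ => 0)
    (by fun_prop) (by fun_prop) (by fun_prop) fun x k => by simp

variable {f g : α → ℝ}

theorem ComputableReal.div_natCast {n : α → ℕ} (hf : ComputableReal f) (hn : Computable n) :
    ComputableReal fun x => f x / n x := by
  obtain ⟨a, ha, h⟩ := hf
  refine computableReal_of_approx (p := a) (q := fun y => 2 ^ y.2 * n y.1) (c := fun _ => 0) ha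
    (by fun_prop) (by fun_prop) fun x k => ?_
  rcases (n x).eq_zero_or_pos with hx | hx
  · simp [hx]
  push_cast
  rw [← div_div, ← sub_div, abs_div, Nat.abs_cast, pow_zero, one_mul]
  exact (div_le_self (abs_nonneg _) (mod_cast hx)).trans (h x k)

theorem ComputableReal.abs_sub (hf : ComputableReal f) (hg : ComputableReal g) :
    ComputableReal fun x => |f x - g x| := by
  obtain ⟨a, ha, hf⟩ := hf
  obtain ⟨b, hb, hg⟩ := hg
  refine computableReal_of_approx (p := fun y => (a y - b y) + (b y - a y)) (q := fun y => 2 ^ y.2)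
    (c := fun _ => 1) (by fun_prop) (by fun_prop) (by fun_prop) fun x k => ?_
  have hdist (m n : ℕ) : (((m - n) + (n - m) : ℕ) : ℝ) = |(m : ℝ) - n| := by
    rcases le_total m n with h | h
    · rw [abs_sub_comm, abs_of_nonneg (by simpa using h), tsub_eq_zero_of_le h, zero_add,
        Nat.cast_sub h]
    · rw [abs_of_nonneg (by simpa using h), tsub_eq_zero_of_le h, add_zero, Nat.cast_sub h]
  have habs : |(a (x, k) : ℝ) - b (x, k)| / (2 ^ k : ℕ) =
      |(a (x, k) / 2 ^ k - b (x, k) / 2 ^ k : ℝ)| := by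
    rw [← sub_div, abs_div, abs_of_pos (show (0 : ℝ) < 2 ^ k by positivity)]
    simp
  rw [hdist, habs]
  calc _ ≤ |(a (x, k) / 2 ^ k - b (x, k) / 2 ^ k : ℝ) - (f x - g x)| :=
        abs_abs_sub_abs_le_abs_sub _ _
    _ = |(a (x, k) / 2 ^ k - f x) - (b (x, k) / 2 ^ k - g x)| := by rw [sub_sub_sub_comm]
    _ ≤ 2⁻¹ ^ k + 2⁻¹ ^ k := (_root_.abs_sub _ _).trans (add_le_add (hf x k) (hg x k))
    _ = 2 ^ 1 * 2⁻¹ ^ k := by ring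

theorem ComputableReal.mul (hf : ComputableReal f) (hg : ComputableReal g) :
    ComputableReal fun x => f x * g x := by
  obtain ⟨a, ha, hf⟩ := hf
  obtain ⟨b, hb, hg⟩ := hg
  refine computableReal_of_approx (p := fun y => a y * b y) (q := fun y => 2 ^ y.2 * 2 ^ y.2)
    (c := fun x => a (x, 0) + b (x, 0) + 3) (by fun_prop) (by fun_prop) (by fun_prop) fun x k => ?_
  set A : ℝ := a (x, k) / 2 ^ k
  set B : ℝ := b (x, k) / 2 ^ k
  have hA : |A - f x| ≤ 2⁻¹ ^ k := hf x k
  have hB : |B - g x| ≤ 2⁻¹ ^ k := hg x k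
  have hpow : (2 : ℝ)⁻¹ ^ k ≤ 1 := pow_le_one₀ (by norm_num) (by norm_num)
  have hA' : |A| ≤ a (x, 0) + 2 := by
    have := hf x 0
    simp only [pow_zero, div_one] at this
    rw [abs_le] at *
    constructor <;> linarith [show (0 : ℝ) ≤ a (x, 0) by positivity]
  have hg' : |g x| ≤ b (x, 0) + 1 := by
    have := hg x 0
    simp only [pow_zero, div_one] at this
    rw [abs_le] at *
    constructor <;> linarith [show (0 : ℝ) ≤ b (x, 0) by positivity]
  calc _ = |A * (B - g x) + g x * (A - f x)| := by
        congr 1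
        simp only [A, B]
        push_cast
        field_simp
        ring
    _ ≤ |A| * |B - g x| + |g x| * |A - f x| := by
        rw [← abs_mul, ← abs_mul]
        exact abs_add_le _ _
    _ ≤ (a (x, 0) + 2) * 2⁻¹ ^ k + (b (x, 0) + 1) * 2⁻¹ ^ k := by gcongr
    _ = (a (x, 0) + b (x, 0) + 3 : ℕ) * 2⁻¹ ^ k := by push_cast; ring
    _ ≤ 2 ^ (a (x, 0) + b (x, 0) + 3) * 2⁻¹ ^ k := by
        gcongr
        exact mod_cast Nat.lt_two_pow_self.le

theorem ComputableReal.sum_words {f : α → BStr → ℝ} {n : α → ℕ}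
    (hf : ComputableReal fun y : α × BStr => f y.1 y.2) (hn : Computable n) :
    ComputableReal fun x => ∑ w ∈ words (n x), f x w := by
  obtain ⟨a, ha, h⟩ := hf
  refine computableReal_of_approx (p := fun y => ∑ w ∈ words (n y.1), a ((y.1, w), y.2))
    (q := fun y => 2 ^ y.2) (c := n) (by fun_prop) (by fun_prop) hn fun x k => ?_
  push_cast
  rw [Finset.sum_div, ← Finset.sum_sub_distrib]
  calc _ ≤ ∑ w ∈ words (n x), |(a ((x, w), k) / 2 ^ k : ℝ) - f x w| :=
        Finset.abs_sum_le_sum_abs _ _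
    _ ≤ ∑ _w ∈ words (n x), 2⁻¹ ^ k := Finset.sum_le_sum fun w _ => h (x, w) k
    _ = 2 ^ n x * 2⁻¹ ^ k := by simp

theorem ComputableMeasure.computableReal {ρ : Measure Cantor} (h : ComputableMeasure ρ) :
    ComputableReal fun x => ρ.real (cyl x) := by
  obtain ⟨q, hq, h⟩ := h
  have hq' : Computable fun y : BStr × ℕ => q y.1 y.2 := hq
  refine computableReal_of_approx (p := fun y => (q y.1 y.2).num.natAbs)
    (q := fun y => (q y.1 y.2).den) (c := fun _ => 0) (computable_rat_natAbs_num.comp hq')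
    (computable_rat_den.comp hq') (by fun_prop) fun x k => ?_
  have habs : ((q x k).num.natAbs / (q x k).den : ℝ) = |(q x k : ℝ)| := by
    rw [Rat.cast_def, abs_div, Nat.abs_cast, Nat.cast_natAbs, Int.cast_abs]
  rw [habs, ← abs_of_nonneg (measureReal_nonneg (μ := ρ) (s := cyl x)), pow_zero, one_mul]
  exact (abs_abs_sub_abs_le_abs_sub _ _).trans (h x k)

theorem exists_computable_lt {f g : α × ℕ → ℝ} (hf : ComputableReal f) (hg : ComputableReal g)
    (h : ∀ x, ∃ n, f (x, n) < g (x, n)) :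
    ∃ N : α → ℕ, Computable N ∧ ∀ x, f (x, N x) < g (x, N x) := by
  obtain ⟨a, ha, hf⟩ := hf
  obtain ⟨b, hb, hg⟩ := hg
  have hpow (k : ℕ) : (2 : ℝ)⁻¹ ^ k = 1 / 2 ^ k := by simp
  obtain ⟨N, hN, hlt⟩ := exists_computable_choice
      (P := fun x i => a ((x, i.unpair.1), i.unpair.2) + 2 < b ((x, i.unpair.1), i.unpair.2))
      (by fun_prop) fun x => by
    obtain ⟨n, hn⟩ := h x
    obtain ⟨k, hk⟩ := exists_pow_lt_of_lt_one (show 0 < (g (x, n) - f (x, n)) / 4 by linarith)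
      (show (2 : ℝ)⁻¹ < 1 by norm_num)
    refine ⟨Nat.pair n k, ?_⟩
    have hfk := abs_le.1 (hf (x, n) k)
    have hgk := abs_le.1 (hg (x, n) k)
    have hdiv : (a ((x, n), k) + 2) / 2 ^ k < (b ((x, n), k) / 2 ^ k : ℝ) := by
      rw [add_div, ← mul_one_div 2, ← hpow]
      linarith
    rw [Nat.unpair_pair]
    have hlt := (div_lt_div_iff_of_pos_right (by positivity : (0 : ℝ) < 2 ^ k)).1 hdiv
    exact mod_cast hlt
  refine ⟨fun x => (N x).unpair.1, by fun_prop, fun x => ?_⟩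
  set n := (N x).unpair.1
  set k := (N x).unpair.2
  have hfk := abs_le.1 (hf (x, n) k)
  have hgk := abs_le.1 (hg (x, n) k)
  have hdiv : (a ((x, n), k) + 2) / 2 ^ k < (b ((x, n), k) / 2 ^ k : ℝ) := by
    gcongr
    exact mod_cast hlt x
  rw [add_div, ← mul_one_div 2, ← hpow] at hdiv
  linarith

end ComputableReals

section CantorSpace

@[simp]
theorem length_seg (Z : Cantor) (n : ℕ) : (seg Z n).length = n := by simp [seg]

theorem mem_cyl {x : BStr} {Z : Cantor} : Z ∈ cyl x ↔ seg Z x.length = x := by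
  constructor
  · intro h
    refine List.ext_getElem (by simp) fun i _ hi => ?_
    simpa [seg] using h ⟨i, hi⟩
  · intro h i
    have hi : (seg Z x.length)[i.1]'(by simp) = x[i.1] := by simp only [h]
    simpa [seg] using hi

theorem mem_cyl_seg (Z : Cantor) (n : ℕ) : Z ∈ cyl (seg Z n) := by
  rw [mem_cyl, length_seg]

theorem take_seg (Z : Cantor) {m n : ℕ} (h : m ≤ n) : (seg Z n).take m = seg Z m :=
  List.ext_getElem (by simp [h]) fun i _ _ => by simp [seg]

theorem cyl_subset_cyl {x y : BStr} (h : x <+: y) : cyl y ⊆ cyl x := by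
  obtain ⟨t, rfl⟩ := h
  intro Z hZ
  rw [mem_cyl] at *
  rw [← take_seg Z (show x.length ≤ (x ++ t).length by simp), hZ, List.take_left]

theorem cyl_nil : cyl [] = Set.univ := by
  ext Z
  simp [cyl]

theorem measurable_comp_seg {β : Type*} [MeasurableSpace β] (F : BStr → β) (n : ℕ) :
    Measurable fun Z : Cantor => F (seg Z n) := by
  have hrestrict : Measurable fun (Z : Cantor) (i : Fin n) => Z i :=
    measurable_pi_lambda _ fun i => measurable_pi_apply _
  exact (measurable_of_countable fun v : Fin n → Bool => F (List.ofFn v)).comp hrestrict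

theorem measurableSet_seg (P : BStr → Prop) (n : ℕ) : MeasurableSet {Z : Cantor | P (seg Z n)} :=
  measurableSet_setOfPred.2 (measurable_comp_seg P n)

theorem measurableSet_cyl (x : BStr) : MeasurableSet (cyl x) := by
  simp only [Set.ext fun Z => mem_cyl (x := x) (Z := Z)]
  exact measurableSet_seg (· = x) _

theorem comp_seg_eq_sum_indicator (F : BStr → ℝ) (n : ℕ) (Z : Cantor) :
    F (seg Z n) = ∑ x ∈ words n, (cyl x).indicator (fun _ => F x) Z := by
  rw [Finset.sum_eq_single_of_mem (seg Z n) (by simp) fun x hx hne => ?_,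
    Set.indicator_of_mem (mem_cyl_seg Z n)]
  rw [mem_words] at hx
  exact Set.indicator_of_notMem (fun h => hne (by rw [← mem_cyl.1 h, hx])) _

variable (μ : Measure Cantor) [IsProbabilityMeasure μ]

theorem integrable_comp_seg (F : BStr → ℝ) (n : ℕ) : Integrable (fun Z => F (seg Z n)) μ := by
  simp only [comp_seg_eq_sum_indicator F n]
  exact integrable_finsetSum _ fun x _ => (integrable_const _).indicator (measurableSet_cyl x)

theorem integral_comp_seg (F : BStr → ℝ) (n : ℕ) :
    ∫ Z, F (seg Z n) ∂μ = ∑ x ∈ words n, F x * μ.real (cyl x) := by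
  simp only [comp_seg_eq_sum_indicator F n]
  rw [integral_finsetSum _ fun x _ => (integrable_const _).indicator (measurableSet_cyl x)]
  refine Finset.sum_congr rfl fun x _ => ?_
  rw [integral_indicator (measurableSet_cyl x), setIntegral_const, smul_eq_mul, mul_comm]

theorem sum_words_measureReal_cyl (n : ℕ) : ∑ x ∈ words n, μ.real (cyl x) = 1 := by
  simpa using (integral_comp_seg μ (fun _ => 1) n).symm

theorem iterate_shift_apply (i : ℕ) (Z : Cantor) (n : ℕ) : (shift^[i] Z) n = Z (n + i) := by
  induction i generalizing Z with
  | zero => rfl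
  | succ i ih =>
    rw [Function.iterate_succ_apply, ih, shift]
    rfl

theorem drop_seg (Z : Cantor) (n i : ℕ) : (seg Z n).drop i = seg (shift^[i] Z) (n - i) :=
  List.ext_getElem (by simp) fun j _ _ => by simp [seg, iterate_shift_apply, add_comm]

theorem seg_add (Z : Cantor) (m n : ℕ) : seg Z (m + n) = seg Z m ++ seg (shift^[m] Z) n := by
  rw [← List.take_append_drop m (seg Z (m + n)), take_seg _ (by lia), drop_seg,
    Nat.add_sub_cancel_left]

theorem seg_succ (Z : Cantor) (n : ℕ) : seg Z (n + 1) = Z 0 :: seg (shift Z) n := by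
  rw [add_comm, seg_add]
  rfl

theorem mem_cyl_cons {b : Bool} {x : BStr} {Z : Cantor} :
    Z ∈ cyl (b :: x) ↔ Z 0 = b ∧ shift Z ∈ cyl x := by
  rw [mem_cyl, mem_cyl, List.length_cons, seg_succ, List.cons_eq_cons]

theorem measureReal_cyl_false_add_true {ρ : Measure Cantor} [IsFiniteMeasure ρ]
    (h : MeasurePreserving shift ρ ρ) (x : BStr) :
    ρ.real (cyl (false :: x)) + ρ.real (cyl (true :: x)) = ρ.real (cyl x) := by
  rw [← h.measureReal_preimage (measurableSet_cyl x).nullMeasurableSet,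
    ← measureReal_union _ (measurableSet_cyl _)]
  · congr 1
    ext Z
    simp only [Set.mem_union, mem_cyl_cons, Set.mem_preimage]
    cases Z 0 <;> simp
  · exact Set.disjoint_left.2 fun Z hfalse htrue =>
      Bool.false_ne_true ((mem_cyl_cons.1 hfalse).1.symm.trans (mem_cyl_cons.1 htrue).1)

end CantorSpace

section MeanErgodic

variable {X : Type*} [MeasurableSpace X] {ρ : Measure X} {T : X → X} {f : X → ℝ}

theorem memLp_birkhoffSum {p : ENNReal} (hT : MeasurePreserving T ρ ρ) (hf : MemLp f p ρ) (N : ℕ) :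
    MemLp (birkhoffSum T f N) p ρ :=
  memLp_finsetSum _ fun j _ => hf.comp_measurePreserving (hT.iterate j)

theorem memLp_birkhoffAverage {p : ENNReal} (hT : MeasurePreserving T ρ ρ) (hf : MemLp f p ρ)
    (N : ℕ) : MemLp (birkhoffAverage ℝ T f N) p ρ :=
  (memLp_birkhoffSum hT hf N).const_smul (N : ℝ)⁻¹

theorem integrable_birkhoffSum (hT : MeasurePreserving T ρ ρ) (hf : Integrable f ρ) (N : ℕ) :
    Integrable (birkhoffSum T f N) ρ :=
  memLp_one_iff_integrable.1 (memLp_birkhoffSum hT (memLp_one_iff_integrable.2 hf) N)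

theorem integrable_birkhoffAverage (hT : MeasurePreserving T ρ ρ) (hf : Integrable f ρ) (N : ℕ) :
    Integrable (birkhoffAverage ℝ T f N) ρ :=
  (integrable_birkhoffSum hT hf N).const_mul (N : ℝ)⁻¹

theorem integral_comp_measurePreserving (hT : MeasurePreserving T ρ ρ)
    (hf : AEStronglyMeasurable f ρ) : ∫ x, f (T x) ∂ρ = ∫ x, f x ∂ρ := by
  have hint := integral_map (f := f) hT.measurable.aemeasurable (by rwa [hT.map_eq])
  rw [← hint, hT.map_eq]

theorem integral_birkhoffSum (hT : MeasurePreserving T ρ ρ) (hf : Integrable f ρ) (N : ℕ) :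
    ∫ x, birkhoffSum T f N x ∂ρ = N * ∫ x, f x ∂ρ := by
  have hcomp : ∀ j ∈ Finset.range N, Integrable (fun x => f (T^[j] x)) ρ :=
    fun j _ => (hT.iterate j).integrable_comp_of_integrable hf
  simp only [birkhoffSum]
  rw [integral_finsetSum _ hcomp]
  simp only [integral_comp_measurePreserving (hT.iterate _) hf.aestronglyMeasurable,
    Finset.sum_const, Finset.card_range, nsmul_eq_mul]

theorem integral_birkhoffAverage (hT : MeasurePreserving T ρ ρ) (hf : Integrable f ρ) {N : ℕ}
    (hN : N ≠ 0) : ∫ x, birkhoffAverage ℝ T f N x ∂ρ = ∫ x, f x ∂ρ := by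
  simp only [birkhoffAverage, smul_eq_mul]
  rw [integral_const_mul, integral_birkhoffSum hT hf, inv_mul_cancel_left₀ (Nat.cast_ne_zero.2 hN)]

theorem birkhoffSum_toLp {p : ENNReal} (hT : MeasurePreserving T ρ ρ) (hf : MemLp f p ρ) (N : ℕ) :
    birkhoffSum (Lp.compMeasurePreserving T hT) id N (hf.toLp f) =
      (memLp_birkhoffSum hT hf N).toLp _ := by
  have hiter (j : ℕ) : (Lp.compMeasurePreserving T hT)^[j] (hf.toLp f) =
      (hf.comp_measurePreserving (hT.iterate j)).toLp _ := by
    rw [← Lp.toLp_compMeasurePreserving hf (hT.iterate j), ← Lp.compMeasurePreserving_iterate]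
  induction N with
  | zero => exact (MemLp.toLp_zero _).symm
  | succ N ih =>
    rw [birkhoffSum_succ, ih, id, hiter, ← MemLp.toLp_add]
    exact MemLp.toLp_congr _ _ (.of_forall fun x => (birkhoffSum_succ T f N x).symm)

theorem integral_abs_le_toReal_eLpNorm [IsProbabilityMeasure ρ] {p : ENNReal} (hp : 1 ≤ p)
    (hf : MemLp f p ρ) : ∫ x, |f x| ∂ρ ≤ (eLpNorm f p ρ).toReal := by
  have hone : ∫ x, |f x| ∂ρ = (eLpNorm f 1 ρ).toReal := by
    rw [eLpNorm_one_eq_lintegral_enorm, ← integral_norm_eq_lintegral_enorm hf.1]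
    rfl
  rw [hone]
  exact ENNReal.toReal_mono hf.2.ne (eLpNorm_le_eLpNorm_of_exponent_le hp hf.1)

theorem exists_tendsto_integral_abs_birkhoffAverage_sub [IsProbabilityMeasure ρ] (hT : Ergodic T ρ)
    (hf : MemLp f 2 ρ) :
    ∃ c : ℝ, Tendsto (fun N => ∫ x, |birkhoffAverage ℝ T f N x - c| ∂ρ) atTop (nhds 0) := by
  have hmp := hT.toMeasurePreserving
  let S : Lp ℝ 2 ρ →L[ℝ] Lp ℝ 2 ρ := (Lp.compMeasurePreservingₗᵢ ℝ T hmp).toContinuousLinearMap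
  have hlim := S.tendsto_birkhoffAverage_orthogonalProjection
    (LinearIsometry.norm_toContinuousLinearMap_le _) (hf.toLp f)
  set g := (S.eqLocus (1 : Lp ℝ 2 ρ →L[ℝ] Lp ℝ 2 ρ)).orthogonalProjectionOnto (hf.toLp f)
  have hg : Lp.compMeasurePreserving T hmp g.1 = g.1 := LinearMap.mem_eqLocus.1 g.2
  obtain ⟨c, hc⟩ := hT.ae_eq_const_of_ae_eq_comp_ae (Lp.aestronglyMeasurable g.1)
    ((Lp.coeFn_compMeasurePreserving g.1 hmp).symm.trans (by rw [hg]))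
  have hgc : g.1 = (memLp_const c).toLp _ := Lp.ext (hc.trans (MemLp.coeFn_toLp _).symm)
  have hdist (N : ℕ) : ‖birkhoffAverage ℝ S id N (hf.toLp f) - g.1‖ =
      (eLpNorm (fun x => birkhoffAverage ℝ T f N x - c) 2 ρ).toReal := by
    have havg : birkhoffAverage ℝ S id N (hf.toLp f) =
        (memLp_birkhoffAverage hmp hf N).toLp _ :=
      congrArg ((N : ℝ)⁻¹ • ·) (birkhoffSum_toLp hmp hf N)
    rw [havg, hgc, ← MemLp.toLp_sub, Lp.norm_toLp]
    rfl
  refine ⟨c, squeeze_zero (fun N => integral_nonneg fun _ => abs_nonneg _) (fun N => ?_)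
    (tendsto_iff_norm_sub_tendsto_zero.1 hlim)⟩
  rw [hdist]
  exact integral_abs_le_toReal_eLpNorm one_le_two
    ((memLp_birkhoffAverage hmp hf N).sub (memLp_const c))

theorem tendsto_integral_abs_birkhoffAverage_sub [IsProbabilityMeasure ρ] (hT : Ergodic T ρ)
    (hf : MemLp f 2 ρ) :
    Tendsto (fun N => ∫ x, |birkhoffAverage ℝ T f N x - ∫ y, f y ∂ρ| ∂ρ) atTop (nhds 0) := by
  obtain ⟨c, hc⟩ := exists_tendsto_integral_abs_birkhoffAverage_sub hT hf
  have hmp := hT.toMeasurePreserving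
  have hint := hf.integrable one_le_two
  suffices hmean : ∫ y, f y ∂ρ = c by rwa [hmean]
  have hbound : ∀ᶠ N in atTop, |∫ y, f y ∂ρ - c| ≤ ∫ x, |birkhoffAverage ℝ T f N x - c| ∂ρ := by
    filter_upwards [eventually_ne_atTop 0] with N hN
    have hsub : ∫ y, f y ∂ρ - c = ∫ x, (birkhoffAverage ℝ T f N x - c) ∂ρ := by
      rw [integral_sub (integrable_birkhoffAverage hmp hint N) (integrable_const c),
        integral_birkhoffAverage hmp hint hN, integral_const, probReal_univ, one_smul]
    rw [hsub]
    exact abs_integral_le_integral_abs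
  exact sub_eq_zero.1 (abs_nonpos_iff.1 (ge_of_tendsto hc hbound))

variable {A V : Set X}

theorem setIntegral_birkhoffAverage_indicator [IsFiniteMeasure ρ] (hT : MeasurePreserving T ρ ρ)
    (hA : MeasurableSet A) (N : ℕ) :
    ∫ x in V, birkhoffAverage ℝ T (A.indicator 1) N x ∂ρ =
      (N : ℝ)⁻¹ * ∑ j ∈ Finset.range N, ρ.real (T^[j] ⁻¹' A ∩ V) := by
  have hcomp (j : ℕ) : (fun x => A.indicator (1 : X → ℝ) (T^[j] x)) = (T^[j] ⁻¹' A).indicator 1 :=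
    rfl
  have hint : Integrable (A.indicator (1 : X → ℝ)) ρ := (integrable_const 1).indicator hA
  have hsum : ∀ j ∈ Finset.range N,
      IntegrableOn (fun x => A.indicator (1 : X → ℝ) (T^[j] x)) V ρ :=
    fun j _ => ((hT.iterate j).integrable_comp_of_integrable hint).integrableOn
  simp only [birkhoffAverage, birkhoffSum, smul_eq_mul]
  rw [integral_const_mul, integral_finsetSum _ hsum]
  congr! 2 with j
  have hj := (hT.iterate j).measurable hA
  rw [hcomp, integral_indicator_one hj, measureReal_restrict_apply hj]

-- If the first `N` iterates of `x ∈ A` lie in `V`, then so does the `(N - 1 - j)`-th iterate of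
-- `T^[j] x`; averaging `T^[j] ⁻¹' A ∩ T^[N - 1] ⁻¹' V` over `j` brings in the visit frequency.
theorem measureReal_inter_forall_iterate_mem_le [IsProbabilityMeasure ρ]
    (hT : MeasurePreserving T ρ ρ) (hA : MeasurableSet A) (hV : MeasurableSet V)
    (N : ℕ) :
    ρ.real (A ∩ {x | ∀ n < N, T^[n] x ∈ V}) ≤ ρ.real V * ρ.real A +
      ∫ x, |birkhoffAverage ℝ T (A.indicator 1) N x - ρ.real A| ∂ρ := by
  obtain rfl | hN := N.eq_zero_or_pos
  · have hnonneg : 0 ≤ ρ.real V * ρ.real A := by positivity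
    simpa [birkhoffAverage] using le_add_of_nonneg_of_le hnonneg (le_abs_self (ρ.real A))
  set V' := T^[N - 1] ⁻¹' V
  have hV' : ρ.real V' = ρ.real V :=
    (hT.iterate (N - 1)).measureReal_preimage hV.nullMeasurableSet
  have hint : Integrable (birkhoffAverage ℝ T (A.indicator 1) N) ρ :=
    integrable_birkhoffAverage hT ((integrable_const 1).indicator hA) N
  have hdev : Integrable (fun x => |birkhoffAverage ℝ T (A.indicator 1) N x - ρ.real A|) ρ :=
    (hint.sub (integrable_const _)).abs
  have hvisit : ∀ j ∈ Finset.range N,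
      ρ.real (A ∩ {x | ∀ n < N, T^[n] x ∈ V}) ≤ ρ.real (T^[j] ⁻¹' A ∩ V') := fun j hj => by
    have hj := Finset.mem_range.1 hj
    have hpre : T^[j] ⁻¹' A ∩ V' = T^[j] ⁻¹' (A ∩ T^[N - 1 - j] ⁻¹' V) := by
      rw [Set.preimage_inter, ← Set.preimage_comp, ← Function.iterate_add,
        Nat.sub_add_cancel (by lia)]
    rw [hpre, (hT.iterate j).measureReal_preimage
      (hA.inter ((hT.iterate _).measurable hV)).nullMeasurableSet]
    exact measureReal_mono fun x hx => ⟨hx.1, hx.2 _ (by lia)⟩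
  calc ρ.real (A ∩ {x | ∀ n < N, T^[n] x ∈ V})
      ≤ (N : ℝ)⁻¹ * ∑ j ∈ Finset.range N, ρ.real (T^[j] ⁻¹' A ∩ V') := by
        rw [← div_eq_inv_mul, le_div_iff₀ (by positivity), mul_comm]
        simpa using Finset.sum_le_sum hvisit
    _ = ∫ x in V', birkhoffAverage ℝ T (A.indicator 1) N x ∂ρ :=
        (setIntegral_birkhoffAverage_indicator hT hA N).symm
    _ ≤ ∫ x in V', (ρ.real A + |birkhoffAverage ℝ T (A.indicator 1) N x - ρ.real A|) ∂ρ :=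
        integral_mono hint.integrableOn ((integrable_const _).add hdev).integrableOn fun x => by
          linarith [le_abs_self (birkhoffAverage ℝ T (A.indicator 1) N x - ρ.real A)]
    _ = ρ.real V * ρ.real A +
          ∫ x in V', |birkhoffAverage ℝ T (A.indicator 1) N x - ρ.real A| ∂ρ := by
        rw [integral_add (integrable_const _) hdev.integrableOn, setIntegral_const, hV',
          smul_eq_mul]
    _ ≤ _ := by
        gcongr
        exacts [.of_forall fun _ => abs_nonneg _, Measure.restrict_le_self]

end MeanErgodic

section VisitFrequencies

/-- The number of positions `j < N` at which the string `x` occurs in `w`. -/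
def occurrences (x w : BStr) (N : ℕ) : ℕ :=
  ∑ j ∈ Finset.range N, if (w.drop j).take x.length = x then 1 else 0

theorem computable_occurrences {α : Type*} [Primcodable α] {f g : α → BStr} {N : α → ℕ}
    (hf : Computable f) (hg : Computable g) (hN : Computable N) :
    Computable fun a => occurrences (f a) (g a) (N a) := by
  unfold occurrences
  fun_prop

theorem birkhoffAverage_indicator_cyl (x : BStr) (N : ℕ) (Z : Cantor) :
    birkhoffAverage ℝ shift ((cyl x).indicator 1) N Z =
      (occurrences x (seg Z (N + x.length)) N : ℝ) / N := by
  rw [birkhoffAverage, birkhoffSum, smul_eq_mul, inv_mul_eq_div, occurrences]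
  push_cast
  congr 1
  refine Finset.sum_congr rfl fun j hj => ?_
  have hj := Finset.mem_range.1 hj
  classical
  rw [drop_seg, take_seg _ (by lia), Set.indicator_apply]
  simp only [mem_cyl, Pi.one_apply]

variable {ρ : Measure Cantor} [IsProbabilityMeasure ρ]

theorem computableReal_integral_abs_birkhoffAverage_sub (hρ : ComputableMeasure ρ) :
    ComputableReal fun q : BStr × ℕ =>
      ∫ Z, |birkhoffAverage ℝ shift ((cyl q.1).indicator 1) q.2 Z - ρ.real (cyl q.1)| ∂ρ := by
  have hsum (x : BStr) (N : ℕ) :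
      ∫ Z, |birkhoffAverage ℝ shift ((cyl x).indicator 1) N Z - ρ.real (cyl x)| ∂ρ =
        ∑ w ∈ words (N + x.length),
          |(occurrences x w N : ℝ) / N - ρ.real (cyl x)| * ρ.real (cyl w) := by
    simp only [birkhoffAverage_indicator_cyl]
    exact integral_comp_seg ρ (fun w => |(occurrences x w N : ℝ) / N - ρ.real (cyl x)|) _
  have hocc : Computable fun y : (BStr × ℕ) × BStr => occurrences y.1.1 y.2 y.1.2 :=
    computable_occurrences (by fun_prop) (by fun_prop) (by fun_prop)
  have hfreq : ComputableReal fun y : (BStr × ℕ) × BStr =>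
      (occurrences y.1.1 y.2 y.1.2 : ℝ) / y.1.2 :=
    (computableReal_natCast hocc).div_natCast (by fun_prop)
  have hx : ComputableReal fun y : (BStr × ℕ) × BStr => ρ.real (cyl y.1.1) :=
    hρ.computableReal.comp (by fun_prop)
  have hw : ComputableReal fun y : (BStr × ℕ) × BStr => ρ.real (cyl y.2) :=
    hρ.computableReal.comp (by fun_prop)
  simp only [hsum]
  exact ((hfreq.abs_sub hx).mul hw).sum_words (by fun_prop)

theorem exists_computable_integral_abs_birkhoffAverage_sub_lt (hρ : ComputableMeasure ρ)
    (herg : Ergodic shift ρ) :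
    ∃ N : BStr × ℕ → ℕ, Computable N ∧ ∀ x k,
      ∫ Z, |birkhoffAverage ℝ shift ((cyl x).indicator 1) (N (x, k)) Z - ρ.real (cyl x)| ∂ρ <
        (2 : ℝ)⁻¹ ^ k := by
  have hdev := (computableReal_integral_abs_birkhoffAverage_sub hρ).comp
    (g := fun y : (BStr × ℕ) × ℕ => (y.1.1, y.2)) (by fun_prop)
  have hpow := computableReal_inv_two_pow (f := fun y : (BStr × ℕ) × ℕ => y.1.2) (by fun_prop)
  obtain ⟨N, hN, hlt⟩ := exists_computable_lt hdev hpow fun q => by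
    have hf : MemLp ((cyl q.1).indicator (1 : Cantor → ℝ)) 2 ρ :=
      (memLp_const 1).indicator (measurableSet_cyl q.1)
    have hlim := tendsto_integral_abs_birkhoffAverage_sub herg hf
    rw [integral_indicator_one (measurableSet_cyl q.1)] at hlim
    exact (hlim.eventually_lt_const (pow_pos (by norm_num) q.2)).exists
  exact ⟨N, hN, fun x k => hlt (x, k)⟩

theorem exists_computable_measureReal_cyl_le (hρ : ComputableMeasure ρ) :
    ∃ x : ℕ → BStr, Computable x ∧ ∀ m, ρ.real (cyl (x m)) ≤ (2 : ℝ)⁻¹ ^ m := by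
  let candidate : ℕ × ℕ → BStr := fun q => (bitStrings (q.1 + 1)).getD q.2 []
  have hcand : Computable candidate := by fun_prop
  obtain ⟨i, hi, hlt⟩ := exists_computable_lt (hρ.computableReal.comp hcand)
    (computableReal_inv_two_pow (f := fun q : ℕ × ℕ => q.1) (by fun_prop)) fun m => by
      have hex : ∃ x ∈ words (m + 1), ρ.real (cyl x) ≤ (2 : ℝ)⁻¹ ^ (m + 1) := by
        refine Finset.exists_le_of_sum_le ⟨List.replicate (m + 1) false, by simp⟩ ?_
        simp [sum_words_measureReal_cyl]
      obtain ⟨x, hx, hle⟩ := hex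
      refine ⟨(bitStrings (m + 1)).idxOf x, ?_⟩
      have hcx : candidate (m, (bitStrings (m + 1)).idxOf x) = x := by
        have hlt := List.idxOf_lt_length_iff.2 (mem_bitStrings.2 (mem_words.1 hx))
        exact (List.getD_eq_getElem _ _ hlt).trans (List.getElem_idxOf hlt)
      rw [hcx]
      exact hle.trans_lt (pow_lt_pow_right_of_lt_one₀ (by norm_num) (by norm_num) m.lt_succ_self)
  exact ⟨fun m => candidate (m, i m), by fun_prop, fun m => (hlt m).le⟩

end VisitFrequencies

section OpenSets

/-- The open set generated by the strings on which `S` is `true`. -/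
def generatedOpen (S : BStr → Bool) : Set Cantor := {Z | ∃ n, S (seg Z n) = true}

theorem measurableSet_generatedOpen (S : BStr → Bool) : MeasurableSet (generatedOpen S) := by
  simp only [generatedOpen, Set.ofPred_exists]
  exact MeasurableSet.iUnion fun n => measurableSet_seg (fun x => S x = true) n

theorem exists_forall_seg_iterate_shift_eq_true {S : BStr → Bool}
    (hmono : ∀ x y : BStr, x <+: y → S x = true → S y = true) {Z : Cantor}
    (hZ : ∀ i, shift^[i] Z ∈ generatedOpen S) (N : ℕ) :
    ∃ l₀, ∀ l ≥ l₀, ∀ n < N, S ((seg Z l).drop n) = true := by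
  choose L hL using hZ
  refine ⟨∑ n ∈ Finset.range N, (n + L n), fun l hl n hn => ?_⟩
  have hle := Finset.single_le_sum (f := fun n => n + L n) (fun _ _ => Nat.zero_le _)
    (Finset.mem_range.2 hn)
  rw [drop_seg]
  refine hmono (seg (shift^[n] Z) (L n)) _ ?_ (hL n)
  rw [← take_seg (shift^[n] Z) (show L n ≤ l - n by lia)]
  exact List.take_prefix _ _

end OpenSets

section Stages

variable (S : BStr → Bool) (N : BStr × ℕ → ℕ)

/-- `y` certifies that the first `n` shifts of every sequence extending it lie in
`generatedOpen S`. -/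
def DropsIn (n : ℕ) (y : BStr) : Prop := ∀ i < n, S (y.drop i) = true

instance (n : ℕ) (y : BStr) : Decidable (DropsIn S n y) :=
  inferInstanceAs (Decidable (∀ i < n, S (y.drop i) = true))

/-- `y` is a shortest extension of `x` with `DropsIn S n y`. -/
def IsMinimalExtension (n : ℕ) (x y : BStr) : Prop :=
  y.take x.length = x ∧ DropsIn S n y ∧
    ∀ l < y.length, ¬(x.length ≤ l ∧ DropsIn S n (y.take l))

instance (n : ℕ) (x y : BStr) : Decidable (IsMinimalExtension S n x y) :=
  inferInstanceAs (Decidable (_ ∧ _ ∧ _))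

/-- The `j`-th stage: starting from the empty string, each string `x` of stage `j` is replaced by
its minimal extensions for `N (x, encode x + j)`. The summand `encode x` makes the errors summable
over all strings `x`, and the summand `j` makes the sums decay geometrically. -/
def stage : ℕ → Set BStr
  | 0 => {[]}
  | j + 1 => ⋃ x ∈ stage j, {y | IsMinimalExtension S (N (x, Encodable.encode x + j)) x y}

/-- The first `j + 1` entries of `c` witness that its `j`-th entry lies in stage `j`. -/
def IsStageChain (j : ℕ) (c : List BStr) : Prop :=
  c.getD 0 [] = [] ∧ ∀ i < j, IsMinimalExtension S
    (N (c.getD i [], Encodable.encode (c.getD i []) + i)) (c.getD i []) (c.getD (i + 1) [])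

instance (j : ℕ) (c : List BStr) : Decidable (IsStageChain S N j c) :=
  inferInstanceAs (Decidable (_ ∧ _))

variable {S N}

section Computability

variable {α : Type*} [Primcodable α]

@[fun_prop]
theorem computable_decide_dropsIn (hS : Computable S) {n : α → ℕ} {y : α → BStr}
    (hn : Computable n) (hy : Computable y) :
    Computable fun a => decide (DropsIn S (n a) (y a)) :=
  computable_decide_forall_lt (P := fun a i => S ((y a).drop i) = true) (by fun_prop) hn

theorem computable_decide_isMinimalExtension (hS : Computable S) {n : α → ℕ} {x y : α → BStr}
    (hn : Computable n) (hx : Computable x) (hy : Computable y) :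
    Computable fun a => decide (IsMinimalExtension S (n a) (x a) (y a)) := by
  unfold IsMinimalExtension
  refine computable_decide_and (by fun_prop) (computable_decide_and (by fun_prop) ?_)
  exact computable_decide_forall_lt
    (P := fun a l => ¬((x a).length ≤ l ∧ DropsIn S (n a) ((y a).take l))) (by fun_prop)
    (by fun_prop)

theorem computable_decide_isStageChain (hS : Computable S) (hN : Computable N) {j : α → ℕ}
    {c : α → List BStr} (hj : Computable j) (hc : Computable c) :
    Computable fun a => decide (IsStageChain S N (j a) (c a)) := by
  refine computable_decide_and (by fun_prop) (computable_decide_forall_lt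
    (computable_decide_isMinimalExtension hS ?_ ?_ ?_) hj) <;> fun_prop

end Computability

theorem IsStageChain.getD_mem_stage {j : ℕ} {c : List BStr} (h : IsStageChain S N j c) :
    c.getD j [] ∈ stage S N j := by
  induction j with
  | zero => exact h.1
  | succ j ih =>
    exact Set.mem_biUnion (ih ⟨h.1, fun i hi => h.2 i (by lia)⟩) (h.2 j j.lt_succ_self)

theorem exists_isStageChain {j : ℕ} {y : BStr} (h : y ∈ stage S N j) :
    ∃ c, IsStageChain S N j c ∧ c.length = j + 1 ∧ c.getD j [] = y := by
  induction j generalizing y with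
  | zero => exact ⟨[[]], ⟨rfl, by simp⟩, rfl, h.symm⟩
  | succ j ih =>
    simp only [stage, Set.mem_iUnion] at h
    obtain ⟨x, hx, hxy⟩ := h
    obtain ⟨c, hc, hlen, hcx⟩ := ih hx
    have happend (i : ℕ) (hi : i ≤ j) : (c ++ [y]).getD i [] = c.getD i [] :=
      List.getD_append _ _ _ _ (by lia)
    have hlast : (c ++ [y]).getD (j + 1) [] = y := by
      simp [hlen]
    refine ⟨c ++ [y], ⟨(happend 0 (by lia)).trans hc.1, fun i hi => ?_⟩, by simp [hlen], hlast⟩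
    rw [happend i (by lia)]
    obtain hij | rfl := Nat.lt_succ_iff_lt_or_eq.1 hi
    · rw [happend (i + 1) hij]
      exact hc.2 i hij
    · rw [hlast, hcx]
      exact hxy

theorem exists_isMinimalExtension_of_forall_iterate_shift_mem
    (hmono : ∀ x y : BStr, x <+: y → S x = true → S y = true) {Z : Cantor}
    (hZ : ∀ i, shift^[i] Z ∈ generatedOpen S) {x : BStr} (hx : Z ∈ cyl x) (n : ℕ) :
    ∃ y, IsMinimalExtension S n x y ∧ Z ∈ cyl y := by
  have hex : ∃ l, x.length ≤ l ∧ DropsIn S n (seg Z l) := by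
    obtain ⟨l₀, hl₀⟩ := exists_forall_seg_iterate_shift_eq_true hmono hZ n
    exact ⟨max x.length l₀, le_max_left _ _, hl₀ _ (le_max_right _ _)⟩
  classical
  obtain ⟨hle, hdrops⟩ := Nat.find_spec hex
  refine ⟨seg Z (Nat.find hex), ⟨?_, hdrops, fun l hl => ?_⟩, mem_cyl_seg _ _⟩
  · rw [take_seg _ hle, mem_cyl.1 hx]
  · rw [length_seg] at hl
    rw [take_seg _ hl.le]
    exact Nat.find_min hex hl

theorem exists_mem_stage_of_forall_iterate_shift_mem
    (hmono : ∀ x y : BStr, x <+: y → S x = true → S y = true) {Z : Cantor}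
    (hZ : ∀ i, shift^[i] Z ∈ generatedOpen S) (j : ℕ) : ∃ y ∈ stage S N j, Z ∈ cyl y := by
  induction j with
  | zero => exact ⟨[], rfl, by simp [cyl_nil]⟩
  | succ j ih =>
    obtain ⟨x, hx, hxZ⟩ := ih
    obtain ⟨y, hxy, hy⟩ := exists_isMinimalExtension_of_forall_iterate_shift_mem hmono hZ hxZ
      (N (x, Encodable.encode x + j))
    exact ⟨y, Set.mem_biUnion hx hxy, hy⟩

theorem IsMinimalExtension.length_le {n : ℕ} {x y y' : BStr} (h : IsMinimalExtension S n x y)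
    (h' : IsMinimalExtension S n x y') {Z : Cantor} (hy : Z ∈ cyl y) (hy' : Z ∈ cyl y') :
    y'.length ≤ y.length := by
  by_contra! hlt
  have htake : y'.take y.length = y := by
    rw [← mem_cyl.1 hy', take_seg _ hlt.le, mem_cyl.1 hy]
  refine h'.2.2 y.length hlt ⟨?_, htake.symm ▸ h.2.1⟩
  simpa using congrArg List.length h.1

theorem pairwiseDisjoint_isMinimalExtension (n : ℕ) (x : BStr) :
    {y | IsMinimalExtension S n x y}.PairwiseDisjoint cyl := by
  intro y hy y' hy' hne
  refine Set.disjoint_left.2 fun Z hZ hZ' => hne ?_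
  rw [← mem_cyl.1 hZ, ← mem_cyl.1 hZ',
    (IsMinimalExtension.length_le hy' hy hZ' hZ).antisymm (hy.length_le hy' hZ hZ')]

theorem iUnion_cyl_isMinimalExtension_subset (n : ℕ) (x : BStr) :
    ⋃ y ∈ {y | IsMinimalExtension S n x y}, cyl y ⊆
      cyl x ∩ {Z | ∀ i < n, shift^[i] Z ∈ generatedOpen S} := by
  refine Set.iUnion₂_subset fun y hy Z hZ => ⟨?_, fun i hi => ?_⟩
  · exact cyl_subset_cyl (hy.1 ▸ List.take_prefix _ _) hZ
  · have hS := hy.2.1 i hi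
    rw [← mem_cyl.1 hZ, drop_seg] at hS
    exact ⟨_, hS⟩

variable {ρ : Measure Cantor} [IsProbabilityMeasure ρ]

theorem tsum_isMinimalExtension_le (h : MeasurePreserving shift ρ ρ) {n : ℕ} {x : BStr} {ε : ℝ}
    (hε : ∫ Z, |birkhoffAverage ℝ shift ((cyl x).indicator 1) n Z - ρ.real (cyl x)| ∂ρ ≤ ε) :
    ∑' y : {y | IsMinimalExtension S n x y}, ρ (cyl y) ≤
      ρ (generatedOpen S) * ρ (cyl x) + ENNReal.ofReal ε := by
  rw [← measure_biUnion (Set.to_countable _) (pairwiseDisjoint_isMinimalExtension n x)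
    fun y _ => measurableSet_cyl y]
  refine (measure_mono (iUnion_cyl_isMinimalExtension_subset n x)).trans ?_
  have hle := measureReal_inter_forall_iterate_mem_le h (measurableSet_cyl x)
    (measurableSet_generatedOpen S) n
  rw [← ofReal_measureReal, ← ofReal_measureReal (s := generatedOpen S),
    ← ofReal_measureReal (s := cyl x), ← ENNReal.ofReal_mul measureReal_nonneg]
  exact (ENNReal.ofReal_le_ofReal (hle.trans (add_le_add_right hε _))).trans ENNReal.ofReal_add_le

theorem tsum_stage_succ_le (h : MeasurePreserving shift ρ ρ)
    (hdev : ∀ x k, ∫ Z, |birkhoffAverage ℝ shift ((cyl x).indicator 1) (N (x, k)) Z -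
      ρ.real (cyl x)| ∂ρ < (2 : ℝ)⁻¹ ^ k) (j : ℕ) :
    ∑' y : stage S N (j + 1), ρ (cyl y) ≤
      ρ (generatedOpen S) * ∑' x : stage S N j, ρ (cyl x) + 2 * 2⁻¹ ^ j := by
  have hpow (k : ℕ) : ENNReal.ofReal ((2 : ℝ)⁻¹ ^ k) = 2⁻¹ ^ k := by
    rw [ENNReal.ofReal_pow (by norm_num), ENNReal.ofReal_inv_of_pos two_pos, ENNReal.ofReal_ofNat]
  calc ∑' y : stage S N (j + 1), ρ (cyl y)
      ≤ ∑' x : stage S N j, ∑' y : {y | IsMinimalExtension S (N (x, Encodable.encode x.1 + j)) x y},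
          ρ (cyl y) := ENNReal.tsum_biUnion_le_tsum (fun y => ρ (cyl y)) _ _
    _ ≤ ∑' x : stage S N j,
          (ρ (generatedOpen S) * ρ (cyl x) + (2⁻¹ : ENNReal) ^ (Encodable.encode x.1 + j)) :=
        ENNReal.tsum_le_tsum fun x => by
          rw [← hpow]
          exact tsum_isMinimalExtension_le h (hdev x.1 _).le
    _ ≤ ρ (generatedOpen S) * ∑' x : stage S N j, ρ (cyl x) +
          ∑' i : ℕ, (2⁻¹ : ENNReal) ^ (i + j) := by
        rw [ENNReal.tsum_add, ENNReal.tsum_mul_left]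
        gcongr
        exact ENNReal.tsum_comp_le_tsum_of_injective
          (Encodable.encode_injective.comp Subtype.val_injective) fun i => (2⁻¹ : ENNReal) ^ (i + j)
    _ = _ := by
        simp_rw [pow_add]
        rw [ENNReal.tsum_mul_right, ENNReal.tsum_geometric, ENNReal.one_sub_inv_two, inv_inv]

end Stages

section Kucera

theorem exists_le_mul_pow_of_succ_le {a : ℕ → ENNReal} {r : ENNReal} (hr : r < 1) (h0 : a 0 ≤ 1)
    (hsucc : ∀ j, a (j + 1) ≤ r * a j + 2 * 2⁻¹ ^ j) :
    ∃ C q : NNReal, q < 1 ∧ ∀ j, a j ≤ C * q ^ j := by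
  lift r to NNReal using hr.ne_top
  obtain ⟨q, hq, hq1⟩ := exists_between
    (max_lt (ENNReal.coe_lt_one_iff.1 hr) (inv_lt_one_of_one_lt₀ one_lt_two))
  obtain ⟨hrq, hhalf⟩ := max_lt_iff.1 hq
  set C := max 1 (2 / (q - r))
  have hC : r * C + 2 ≤ q * C := by
    have hmul := (div_le_iff₀ (tsub_pos_of_lt hrq)).1 (le_max_right 1 (2 / (q - r)))
    rw [← tsub_add_cancel_of_le hrq.le, add_mul, add_comm]
    gcongr
    rwa [mul_comm]
  refine ⟨C, q, hq1, fun j => ?_⟩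
  induction j with
  | zero => simpa using h0.trans (by exact_mod_cast le_max_left 1 (2 / (q - r)))
  | succ j ih =>
    calc a (j + 1) ≤ r * (C * q ^ j) + 2 * q ^ j := by
          refine (hsucc j).trans ?_
          gcongr
          rw [← ENNReal.coe_ofNat, ← ENNReal.coe_inv two_ne_zero]
          exact_mod_cast hhalf.le
      _ = ((r * C + 2 : NNReal) : ENNReal) * q ^ j := by push_cast; ring
      _ ≤ ((q * C : NNReal) : ENNReal) * q ^ j := by gcongr
      _ = C * q ^ (j + 1) := by push_cast; ring

theorem exists_linear_le_inv_two_pow {a : ℕ → ENNReal} {C q : NNReal} (hq : q < 1)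
    (h : ∀ j, a j ≤ C * q ^ j) : ∃ A B : ℕ, ∀ m, a (A * m + B) ≤ 2⁻¹ ^ m := by
  obtain ⟨A, hA⟩ := exists_pow_lt_of_lt_one (show (0 : NNReal) < 2⁻¹ by positivity) hq
  obtain ⟨B, hB⟩ := exists_pow_lt_of_lt_one (show (0 : NNReal) < (C + 1)⁻¹ by positivity) hq
  have hCB : C * q ^ B ≤ 1 := by
    calc C * q ^ B ≤ (C + 1) * (C + 1)⁻¹ := by gcongr; exact le_self_add
      _ = 1 := mul_inv_cancel₀ (by positivity)
  refine ⟨A, B, fun m => (h _).trans ?_⟩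
  rw [← ENNReal.coe_ofNat, ← ENNReal.coe_inv two_ne_zero]
  norm_cast
  calc C * q ^ (A * m + B) = (q ^ A) ^ m * (C * q ^ B) := by ring
    _ ≤ 2⁻¹ ^ m * 1 := by gcongr
    _ = 2⁻¹ ^ m := mul_one _

variable {ρ μ : Measure Cantor} [IsProbabilityMeasure ρ]

-- A test enumerates infinitely many strings at every level; the strings of small measure stand in
-- for the indices that `P` rejects.
theorem MLAC.measure_eq_zero_of_subset (hμ : MLAC μ ρ) (hρ : ComputableMeasure ρ)
    {x : ℕ × ℕ → BStr} {P : ℕ × ℕ → Prop} [DecidablePred P] (hx : Computable x)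
    (hP : Computable fun q => decide (P q))
    (hle : ∀ m, ρ (⋃ i ∈ {i | P (m, i)}, cyl (x (m, i))) ≤ 2⁻¹ ^ m) {E : Set Cantor}
    (hE : ∀ m, E ⊆ ⋃ i ∈ {i | P (m, i)}, cyl (x (m, i))) : μ E = 0 := by
  obtain ⟨filler, hfiller, hfiller_le⟩ := exists_computable_measureReal_cyl_le hρ
  let σ : ℕ → ℕ → BStr := fun m i => if P (m + 1, i) then x (m + 1, i) else filler (m + 1)
  have hσ : Computable fun q : ℕ × ℕ => σ q.1 q.2 := by
    have hP' : Computable fun q : ℕ × ℕ => decide (P (q.1 + 1, q.2)) :=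
      hP.comp (g := fun q : ℕ × ℕ => (q.1 + 1, q.2)) (by fun_prop)
    exact computable_ite hP' (by fun_prop) (by fun_prop)
  have hsub (m : ℕ) : ⋃ i, cyl (σ m i) ⊆
      (⋃ i ∈ {i | P (m + 1, i)}, cyl (x (m + 1, i))) ∪ cyl (filler (m + 1)) := by
    refine Set.iUnion_subset fun i => ?_
    by_cases hi : P (m + 1, i)
    · exact .trans (by simp [σ, hi]) (Set.subset_union_of_subset_left
        (Set.subset_biUnion_of_mem (u := fun i => cyl (x (m + 1, i))) hi) _)
    · exact .trans (by simp [σ, hi]) Set.subset_union_right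
  have htest : IsMLTest ρ fun m => ⋃ i, cyl (σ m i) := by
    refine ⟨⟨σ, hσ, fun _ => rfl⟩, fun m => ?_⟩
    have hfill : ρ (cyl (filler (m + 1))) ≤ 2⁻¹ ^ (m + 1) := by
      rw [← ENNReal.toReal_le_toReal (measure_ne_top _ _) (by simp)]
      simpa [Measure.real] using hfiller_le (m + 1)
    calc ρ (⋃ i, cyl (σ m i)) ≤ 2⁻¹ ^ (m + 1) + 2⁻¹ ^ (m + 1) :=
          (measure_mono (hsub m)).trans
            ((measure_union_le _ _).trans (add_le_add (hle (m + 1)) hfill))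
      _ = 2⁻¹ ^ m := by rw [pow_succ, ← mul_add, ENNReal.inv_two_add_inv_two, mul_one]
  refine le_antisymm ?_ zero_le
  rw [← hμ _ htest]
  refine le_iInf fun m => measure_mono ((hE (m + 1)).trans (Set.iUnion₂_subset fun i hi => ?_))
  exact .trans (by simp [σ, show P (m + 1, i) from hi]) (Set.subset_iUnion _ i)

/-- **Kučera's theorem** for computable ergodic measures. -/
theorem MLAC.measure_forall_iterate_shift_mem_eq_zero (hμ : MLAC μ ρ) (hρ : ComputableMeasure ρ)
    (herg : Ergodic shift ρ) {S : BStr → Bool} (hS : Computable S)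
    (hmono : ∀ x y : BStr, x <+: y → S x = true → S y = true) (hlt : ρ (generatedOpen S) < 1) :
    μ {Z | ∀ i, shift^[i] Z ∈ generatedOpen S} = 0 := by
  obtain ⟨N, hN, hdev⟩ := exists_computable_integral_abs_birkhoffAverage_sub_lt hρ herg
  obtain ⟨C, q, hq, hgeom⟩ := exists_le_mul_pow_of_succ_le
    (a := fun j => ∑' y : stage S N j, ρ (cyl y)) hlt
    ((tsum_singleton [] fun y => ρ (cyl y)).trans_le prob_le_one)
    (tsum_stage_succ_le herg.toMeasurePreserving hdev)
  obtain ⟨A, B, hAB⟩ := exists_linear_le_inv_two_pow hq hgeom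
  let chain : ℕ → List BStr := fun i => (Encodable.decode i).getD []
  have hchain : Computable chain :=
    Primrec.option_getD.to_comp.comp Computable.decode (Computable.const [])
  have hunion (m : ℕ) : ⋃ i ∈ {i | IsStageChain S N (A * m + B) (chain i)},
      cyl ((chain i).getD (A * m + B) []) = ⋃ y ∈ stage S N (A * m + B), cyl y := by
    refine subset_antisymm (Set.iUnion₂_subset fun i hi =>
      Set.subset_biUnion_of_mem (u := cyl) hi.getD_mem_stage) (Set.iUnion₂_subset fun y hy => ?_)
    obtain ⟨c, hc, -, rfl⟩ := exists_isStageChain hy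
    have hcode : chain (Encodable.encode c) = c := by simp [chain]
    exact .trans (by rw [hcode]) (Set.subset_biUnion_of_mem
      (u := fun i => cyl ((chain i).getD (A * m + B) []))
      (show IsStageChain _ _ _ _ by rwa [hcode]))
  refine hμ.measure_eq_zero_of_subset hρ
    (x := fun q => (chain q.2).getD (A * q.1 + B) [])
    (P := fun q => IsStageChain S N (A * q.1 + B) (chain q.2)) (by fun_prop)
    (computable_decide_isStageChain hS hN (by fun_prop) (by fun_prop)) (fun m => ?_)
    fun m Z hZ => ?_
  · rw [hunion]
    exact (measure_biUnion_le ρ (Set.to_countable _) _).trans (hAB m)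
  · rw [hunion]
    obtain ⟨y, hy, hZy⟩ := exists_mem_stage_of_forall_iterate_shift_mem hmono hZ (A * m + B)
    exact Set.mem_biUnion hy hZy

end Kucera

section OrbitCosts

variable {X : Type*} {T : X → X} {F : ℕ → X → ℝ} {Good : ℕ → Set X} {t c : ℝ}

/-- `F L x` bounds the cost of the first `L` steps of the orbit of `x`: the next `n` steps cost
at most `t` per step from a point of `Good n`, and a single step costs at most `t + c` from any
point. -/
structure IsOrbitCost (T : X → X) (F : ℕ → X → ℝ) (Good : ℕ → Set X) (t c : ℝ) : Prop where
  zero_le : ∀ x, F 0 x ≤ 0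
  add_le : ∀ n ≥ 1, ∀ L, ∀ x ∈ Good n, F (n + L) x ≤ t * n + F L (T^[n] x)
  succ_le : ∀ L x, F (L + 1) x ≤ t + c + F L (T x)

theorem IsOrbitCost.le_mul (h : IsOrbitCost T F Good t c) (L : ℕ) (x : X) :
    F L x ≤ (t + c) * L := by
  induction L generalizing x with
  | zero => simpa using h.zero_le x
  | succ L ih =>
    push_cast
    linarith [h.succ_le L x, ih (T x)]

-- Follow the orbit of `x`: jump over a good block of length at most `M` where there is one, and
-- make a single step at the points of `B`, until fewer than `M` steps are left.
theorem IsOrbitCost.le_birkhoffSum (h : IsOrbitCost T F Good t c) (hc : 0 ≤ c) {M : ℕ} {B : Set X}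
    (hB : ∀ x ∉ B, ∃ n, 1 ≤ n ∧ n ≤ M ∧ x ∈ Good n) (L : ℕ) (x : X) :
    F L x ≤ t * L + c * birkhoffSum T (B.indicator 1) L x + c * M := by
  have hsum (L : ℕ) (x : X) : 0 ≤ c * birkhoffSum T (B.indicator 1) L x :=
    mul_nonneg hc (Finset.sum_nonneg fun _ _ => Set.indicator_nonneg (fun _ _ => zero_le_one) _)
  induction L using Nat.strong_induction_on generalizing x with
  | _ L ih =>
    rcases lt_or_ge L M with hLM | hML
    · have hcM : c * L ≤ c * M := by gcongr
      linarith [h.le_mul L x, hsum L x]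
    by_cases hx : x ∈ B
    · rcases L with _ | L
      · have hcM : 0 ≤ c * M := by positivity
        simpa using (h.zero_le x).trans hcM
      · have hstep := ih L L.lt_succ_self (T x)
        rw [birkhoffSum_succ', Set.indicator_of_mem hx, Pi.one_apply]
        push_cast
        linarith [h.succ_le L x]
    · obtain ⟨n, hn, hnM, hxn⟩ := hB x hx
      obtain ⟨L, rfl⟩ := Nat.exists_eq_add_of_le (hnM.trans hML)
      have hjump := ih L (by lia) (T^[n] x)
      rw [birkhoffSum_add]
      push_cast
      linarith [h.add_le n hn L x hxn, hsum n x]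

variable [MeasurableSpace X] {ρ : Measure X}

theorem exists_measureReal_forall_le_notMem_lt [IsFiniteMeasure ρ] {A : ℕ → Set X}
    (hA : ∀ n, MeasurableSet (A n)) (hfull : ∀ᵐ x ∂ρ, ∃ n, x ∈ A n) {ε : ℝ} (hε : 0 < ε) :
    ∃ M, ρ.real {x | ∀ n ≤ M, x ∉ A n} < ε := by
  have hmeas (M : ℕ) : MeasurableSet {x | ∀ n ≤ M, x ∉ A n} := by
    simp only [Set.ofPred_forall]
    exact MeasurableSet.iInter fun n => MeasurableSet.iInter fun _ => (hA n).compl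
  have hlim := tendsto_measure_iInter_atTop (fun M => (hmeas M).nullMeasurableSet)
    (fun M N hMN x hx n hn => hx n (hn.trans hMN)) ⟨0, measure_ne_top ρ _⟩
  have hnull : ρ (⋂ M, {x | ∀ n ≤ M, x ∉ A n}) = 0 := by
    refine measure_mono_null (fun x hx => ?_) hfull
    rintro ⟨n, hn⟩
    exact Set.mem_iInter.1 hx n n le_rfl hn
  rw [hnull] at hlim
  exact (((ENNReal.tendsto_toReal ENNReal.zero_ne_top).comp hlim).eventually_lt_const hε).exists

theorem IsOrbitCost.exists_integral_le [IsProbabilityMeasure ρ] (h : IsOrbitCost T F Good t c)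
    (hT : MeasurePreserving T ρ ρ) (hc : 0 ≤ c) (hF : ∀ L, Integrable (F L) ρ)
    (hGood : ∀ n, MeasurableSet (Good n)) (hfull : ∀ᵐ x ∂ρ, ∃ n ≥ 1, x ∈ Good n) {η : ℝ}
    (hη : 0 < η) : ∃ C : ℝ, ∀ L : ℕ, ∫ x, F L x ∂ρ ≤ (t + η) * L + C := by
  obtain ⟨M, hM⟩ := exists_measureReal_forall_le_notMem_lt (A := fun n => {x | n ≥ 1 ∧ x ∈ Good n})
    (fun n => (MeasurableSet.const _).inter (hGood n)) hfull
    (show 0 < η / (c + 1) by positivity)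
  set B := {x | ∀ n ≤ M, x ∉ {x | n ≥ 1 ∧ x ∈ Good n}}
  have hB : MeasurableSet B := by
    simp only [B, Set.ofPred_forall]
    exact MeasurableSet.iInter fun n => MeasurableSet.iInter fun _ =>
      ((MeasurableSet.const _).inter (hGood n)).compl
  have hind : Integrable (B.indicator (1 : X → ℝ)) ρ := (integrable_const 1).indicator hB
  have hsum (L : ℕ) : Integrable (fun x => c * birkhoffSum T (B.indicator 1) L x) ρ :=
    (integrable_birkhoffSum hT hind L).const_mul c
  have hlin (L : ℕ) : Integrable (fun x => t * L + c * birkhoffSum T (B.indicator 1) L x) ρ :=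
    (integrable_const _).add (hsum L)
  have hcB : c * ρ.real B ≤ η := by
    rw [lt_div_iff₀ (by positivity)] at hM
    linarith [measureReal_nonneg (μ := ρ) (s := B)]
  refine ⟨c * M, fun L => ?_⟩
  calc ∫ x, F L x ∂ρ
      ≤ ∫ x, (t * L + c * birkhoffSum T (B.indicator 1) L x + c * M) ∂ρ := by
        refine integral_mono (hF L) ((hlin L).add (integrable_const _))
          (h.le_birkhoffSum hc (fun x hx => ?_) L)
        simpa [B, and_left_comm] using hx
    _ = t * L + c * ∫ x, birkhoffSum T (B.indicator 1) L x ∂ρ + c * M := by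
        rw [integral_add (hlin L) (integrable_const _), integral_add (integrable_const _) (hsum L)]
        simp [integral_const_mul]
    _ = t * L + c * ρ.real B * L + c * M := by
        rw [integral_birkhoffSum hT hind, integral_indicator_one hB]
        ring
    _ ≤ (t + η) * L + c * M := by
        rw [add_mul]
        gcongr

end OrbitCosts

section Entropy

theorem mul_sub_log_le_sub {p q : ℝ} (hp : 0 ≤ p) (hq : 0 < q) :
    p * (Real.log q - Real.log p) ≤ q - p := by
  rcases hp.eq_or_lt with rfl | hp'
  · simpa using hq.le
  · calc p * (Real.log q - Real.log p) = p * Real.log (q / p) := by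
          rw [Real.log_div hq.ne' hp'.ne']
      _ ≤ p * (q / p - 1) := by
          gcongr
          exact Real.log_le_sub_one_of_pos (div_pos hq hp')
      _ = q - p := by field_simp

theorem mul_entropyAt (ρ : Measure Cantor) [IsProbabilityMeasure ρ] (n : ℕ) :
    n * entropyAt ρ n = ∫ Z, -Real.logb 2 (ρ.real (cyl (seg Z n))) ∂ρ := by
  obtain rfl | hn := eq_or_ne n 0
  · simp [seg, cyl_nil]
  · rw [entropyAt, ← mul_assoc, mul_neg, mul_one_div_cancel (Nat.cast_ne_zero.2 hn), neg_one_mul,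
      integral_comp_seg ρ fun x => -Real.logb 2 (ρ.real (cyl x))]
    simp only [neg_mul, mul_comm (Real.logb _ _), Finset.sum_neg_distrib]
    exact congrArg Neg.neg
      (sum_ofFn_eq_sum_words n fun x => ρ.real (cyl x) * Real.logb 2 (ρ.real (cyl x)))

theorem mul_entropyAt_le_integral_neg_logb (ρ : Measure Cantor) [IsProbabilityMeasure ρ]
    {Q : BStr → ℝ} (hQ : ∀ x, 0 < Q x) {n : ℕ} (hsum : ∑ x ∈ words n, Q x ≤ 1) :
    n * entropyAt ρ n ≤ ∫ Z, -Real.logb 2 (Q (seg Z n)) ∂ρ := by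
  have hlog : 0 < Real.log 2 := Real.log_pos one_lt_two
  rw [mul_entropyAt, integral_comp_seg ρ fun x => -Real.logb 2 (ρ.real (cyl x)),
    integral_comp_seg ρ fun x => -Real.logb 2 (Q x), ← sub_nonneg, ← Finset.sum_sub_distrib]
  have hgibbs : ∑ x ∈ words n, ρ.real (cyl x) * (Real.log (Q x) - Real.log (ρ.real (cyl x))) ≤ 0 :=
    calc _ ≤ ∑ x ∈ words n, (Q x - ρ.real (cyl x)) :=
          Finset.sum_le_sum fun x _ => mul_sub_log_le_sub measureReal_nonneg (hQ x)
      _ ≤ 0 := by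
          rw [Finset.sum_sub_distrib, sum_words_measureReal_cyl]
          exact sub_nonpos.2 hsum
  calc 0 ≤ -(∑ x ∈ words n, ρ.real (cyl x) * (Real.log (Q x) - Real.log (ρ.real (cyl x)))) /
        Real.log 2 := div_nonneg (neg_nonneg.2 hgibbs) hlog.le
    _ = _ := by
        rw [← Finset.sum_neg_distrib, Finset.sum_div]
        refine Finset.sum_congr rfl fun x _ => ?_
        simp only [Real.logb]
        ring

end Entropy

section Parsings

/-- The total weight of all factorizations of a string into nonempty blocks, where a factorization
has the product of the weights `w` of its blocks as its weight. -/
noncomputable def parsingWeight (w : BStr → ℝ) : BStr → ℝ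
  | [] => 1
  | b :: x => ∑ l : Fin (x.length + 1), w (b :: x.take l) * parsingWeight w (x.drop l)
termination_by x => x.length
decreasing_by simp

variable {w : BStr → ℝ}

theorem parsingWeight_eq_sum_range {n : ℕ} {x : BStr} (hx : x.length = n + 1) :
    parsingWeight w x =
      ∑ l ∈ Finset.range (n + 1), w (x.take (l + 1)) * parsingWeight w (x.drop (l + 1)) := by
  obtain ⟨b, x, rfl⟩ := List.exists_cons_of_length_eq_add_one hx
  obtain rfl : x.length = n := by simpa using hx
  rw [parsingWeight, Fin.sum_univ_eq_sum_range
    (fun l => w (b :: x.take l) * parsingWeight w (x.drop l))]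
  rfl

theorem parsingWeight_nonneg (hw : ∀ x, 0 ≤ w x) (x : BStr) : 0 ≤ parsingWeight w x := by
  induction h : x.length using Nat.strong_induction_on generalizing x with
  | _ n ih =>
    rcases n with _ | n
    · simp [List.length_eq_zero_iff.1 h, parsingWeight]
    · rw [parsingWeight_eq_sum_range h]
      exact Finset.sum_nonneg fun l _ => mul_nonneg (hw _) (ih _ (by simp; lia) _ rfl)

theorem mul_parsingWeight_le_append (hw : ∀ x, 0 ≤ w x) {y : BStr} (hy : y ≠ []) (x : BStr) :
    w y * parsingWeight w x ≤ parsingWeight w (y ++ x) := by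
  obtain ⟨n, hn⟩ := Nat.exists_eq_add_one.2 (List.length_pos_iff.2 hy)
  have hlen : (y ++ x).length = n + x.length + 1 := by simp; lia
  rw [parsingWeight_eq_sum_range hlen]
  have hterm := Finset.single_le_sum
    (f := fun l => w ((y ++ x).take (l + 1)) * parsingWeight w ((y ++ x).drop (l + 1)))
    (fun l _ => mul_nonneg (hw _) (parsingWeight_nonneg hw _))
    (Finset.mem_range.2 (show n < n + x.length + 1 by lia))
  simpa [← hn] using hterm

theorem sum_words_parsingWeight_le_one (hw : ∀ x, 0 ≤ w x)
    (hsum : ∀ n, ∑ l ∈ Finset.range n, ∑ x ∈ words (l + 1), w x ≤ 1) (n : ℕ) :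
    ∑ x ∈ words n, parsingWeight w x ≤ 1 := by
  induction n using Nat.strong_induction_on with
  | _ n ih =>
    rcases n with _ | n
    · simp [sum_words_zero, parsingWeight]
    refine le_trans ?_ (hsum (n + 1))
    rw [Finset.sum_congr rfl fun x hx => parsingWeight_eq_sum_range (w := w) (mem_words.1 hx),
      Finset.sum_comm]
    refine Finset.sum_le_sum fun l hl => ?_
    have hl := Finset.mem_range.1 hl
    obtain ⟨m, rfl⟩ := Nat.exists_eq_add_of_le (Nat.lt_succ_iff.1 hl)
    rw [Nat.add_right_comm, sum_words_add]
    refine Finset.sum_le_sum fun y hy => ?_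
    have hsplit (z : BStr) : w ((y ++ z).take (l + 1)) * parsingWeight w ((y ++ z).drop (l + 1)) =
        w y * parsingWeight w z := by
      simp [← mem_words.1 hy]
    simp only [hsplit, ← Finset.mul_sum]
    exact mul_le_of_le_one_right (hw y) (ih m (by lia))

theorem parsingWeight_pos (hw : ∀ x, 0 ≤ w x) (hbit : ∀ b, 0 < w [b]) (x : BStr) :
    0 < parsingWeight w x := by
  induction x with
  | nil => simp [parsingWeight]
  | cons b x ih =>
    exact (mul_pos (hbit b) ih).trans_le (mul_parsingWeight_le_append hw (List.cons_ne_nil b []) x)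

theorem neg_logb_parsingWeight_append_le (hw : ∀ x, 0 ≤ w x) (hbit : ∀ b, 0 < w [b])
    {y : BStr} (hy : y ≠ []) {a : ℝ} (hay : 2 ^ (-a) ≤ w y) (x : BStr) :
    -Real.logb 2 (parsingWeight w (y ++ x)) ≤ a + -Real.logb 2 (parsingWeight w x) := by
  have hpos := parsingWeight_pos hw hbit x
  have hle : 2 ^ (-a) * parsingWeight w x ≤ parsingWeight w (y ++ x) :=
    (mul_le_mul_of_nonneg_right hay hpos.le).trans (mul_parsingWeight_le_append hw hy x)
  have hlog := Real.logb_le_logb_of_le one_lt_two (by positivity) hle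
  rw [Real.logb_mul (by positivity) hpos.ne', Real.logb_rpow two_pos (by norm_num)] at hlog
  linarith

theorem isOrbitCost_neg_logb_parsingWeight (hw : ∀ x, 0 ≤ w x) {t c : ℝ}
    (hbit : ∀ b, 2 ^ (-(t + c)) ≤ w [b]) {E : Set BStr}
    (hE : ∀ y ∈ E, 2 ^ (-(t * y.length)) ≤ w y) :
    IsOrbitCost shift (fun n Z => -Real.logb 2 (parsingWeight w (seg Z n)))
      (fun n => {Z | seg Z n ∈ E}) t c where
  zero_le Z := by simp [seg, parsingWeight]
  add_le n hn L Z hZ := by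
    have hbit' (b : Bool) : 0 < w [b] := (Real.rpow_pos_of_pos two_pos _).trans_le (hbit b)
    have hne : seg Z n ≠ [] := List.length_pos_iff.1 (by rwa [length_seg])
    have hle := hE _ hZ
    rw [length_seg] at hle
    rw [seg_add]
    exact neg_logb_parsingWeight_append_le hw hbit' hne hle _
  succ_le L Z := by
    have hbit' (b : Bool) : 0 < w [b] := (Real.rpow_pos_of_pos two_pos _).trans_le (hbit b)
    rw [seg_succ]
    exact neg_logb_parsingWeight_append_le hw hbit' (List.cons_ne_nil _ []) (hbit (Z 0)) _

end Parsings

section EntropyLowerBound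

variable {ρ : Measure Cantor} [IsProbabilityMeasure ρ] {s t : ℝ}

theorem le_of_ae_exists_seg_mem (hρ : MeasurePreserving shift ρ ρ)
    (hs : Tendsto (entropyAt ρ) atTop (nhds s)) {w : BStr → ℝ} (hw : ∀ x, 0 ≤ w x)
    (hsum : ∀ n, ∑ l ∈ Finset.range n, ∑ x ∈ words (l + 1), w x ≤ 1) {c : ℝ} (hc : 0 ≤ c)
    (hbit : ∀ b, 2 ^ (-(t + c)) ≤ w [b]) {E : Set BStr}
    (hE : ∀ y ∈ E, 2 ^ (-(t * y.length)) ≤ w y) (hfull : ∀ᵐ Z ∂ρ, ∃ n ≥ 1, seg Z n ∈ E) :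
    s ≤ t := by
  refine le_of_forall_pos_le_add fun η hη => ?_
  obtain ⟨C, hC⟩ := (isOrbitCost_neg_logb_parsingWeight hw hbit hE).exists_integral_le hρ hc
    (fun n => integrable_comp_seg ρ (fun x => -Real.logb 2 (parsingWeight w x)) n)
    (fun n => measurableSet_seg (· ∈ E) n) hfull hη
  have hbound : ∀ᶠ n : ℕ in atTop, entropyAt ρ n ≤ t + η + C / n := by
    filter_upwards [eventually_gt_atTop 0] with n hn
    have hn' : (0 : ℝ) < n := mod_cast hn
    refine le_of_mul_le_mul_left ?_ hn'
    calc n * entropyAt ρ n ≤ ∫ Z, -Real.logb 2 (parsingWeight w (seg Z n)) ∂ρ :=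
          mul_entropyAt_le_integral_neg_logb ρ
            (parsingWeight_pos hw fun b => (Real.rpow_pos_of_pos two_pos _).trans_le (hbit b))
            (sum_words_parsingWeight_le_one hw hsum n)
      _ ≤ (t + η) * n + C := hC n
      _ = n * (t + η + C / n) := by field_simp
  have hlim : Tendsto (fun n : ℕ => t + η + C / n) atTop (nhds (t + η + 0)) :=
    tendsto_const_nhds.add (tendsto_const_div_atTop_nhds_zero_nat C)
  simpa using le_of_tendsto_of_tendsto hs hlim hbound

theorem sum_range_indicator_Ici_pow_le {θ : ℝ} (h0 : 0 ≤ θ) (h1 : θ < 1) (N n : ℕ) :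
    ∑ l ∈ Finset.range n, (Set.Ici N).indicator (θ ^ ·) (l + 1) ≤ θ ^ N / (1 - θ) := by
  have hshift : ∑ l ∈ Finset.range n, (Set.Ici N).indicator (θ ^ ·) (l + 1) ≤
      ∑ l ∈ Finset.range (n + 1), (Set.Ici N).indicator (θ ^ ·) l := by
    rw [Finset.sum_range_succ' _ n]
    exact le_add_of_nonneg_right (Set.indicator_nonneg (fun _ _ => pow_nonneg h0 _) _)
  have hIco : (Finset.range (n + 1)).filter (· ∈ Set.Ici N) = Finset.Ico N (n + 1) := by
    ext l
    simp [and_comm]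
  refine hshift.trans ?_
  simp only [Set.indicator_apply, ← Finset.sum_filter, hIco]
  exact geom_sum_Ico_le_of_lt_one h0 h1

/-- The block weight `1 / 8` for single bits plus `2 ^ (-(t * |x|))` for the strings `x ∈ D` of
length at least `N`. -/
noncomputable def blockWeight (D : Set BStr) (t : ℝ) (N : ℕ) (x : BStr) : ℝ :=
  {x | x.length = 1}.indicator (fun _ => 1 / 8) x +
    {x | x ∈ D ∧ N ≤ x.length}.indicator (fun x => 2 ^ (-(t * x.length))) x

theorem blockWeight_nonneg (D : Set BStr) (t : ℝ) (N : ℕ) (x : BStr) : 0 ≤ blockWeight D t N x :=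
  add_nonneg (Set.indicator_nonneg (fun _ _ => by norm_num) _)
    (Set.indicator_nonneg (fun _ _ => by positivity) _)

open Classical in
theorem sum_words_indicator_eq (D : Set BStr) (f : ℕ → ℝ) (N n : ℕ) :
    ∑ x ∈ words n, {x | x ∈ D ∧ N ≤ x.length}.indicator (fun x => f x.length) x =
      (Set.Ici N).indicator (fun n => ((words n).filter (· ∈ D)).card * f n) n := by
  have hterm : ∀ x ∈ words n, {x | x ∈ D ∧ N ≤ x.length}.indicator (fun x => f x.length) x =
      if x ∈ D ∧ N ≤ n then f n else 0 := fun x hx => by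
    simp [Set.indicator_apply, mem_words.1 hx]
  rw [Finset.sum_congr rfl hterm]
  by_cases hN : N ≤ n
  · simp [hN, ← Finset.sum_filter, -mem_words]
  · simp [hN]

open Classical in
theorem sum_words_blockWeight_le {D : Set BStr} {t' : ℝ}
    (hD : ∀ n, ((words n).filter (· ∈ D)).card ≤ 2 * (2 : ℝ) ^ (t' * n)) (t : ℝ) (N l : ℕ) :
    ∑ x ∈ words (l + 1), blockWeight D t N x ≤
      (if l = 0 then 1 / 4 else 0) + 2 * (Set.Ici N).indicator ((2 ^ (t' - t)) ^ ·) (l + 1) := by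
  have hbits : ∑ x ∈ words (l + 1), {x : BStr | x.length = 1}.indicator (fun _ => (1 / 8 : ℝ)) x =
      if l = 0 then 1 / 4 else 0 := by
    have hterm : ∀ x ∈ words (l + 1), {x : BStr | x.length = 1}.indicator (fun _ => (1 / 8 : ℝ)) x =
        if l = 0 then 1 / 8 else 0 := fun x hx => by simp [Set.indicator_apply, mem_words.1 hx]
    rw [Finset.sum_congr rfl hterm]
    split_ifs with hl <;> norm_num [hl]
  simp only [blockWeight, Finset.sum_add_distrib, hbits]
  rw [sum_words_indicator_eq D (fun n => 2 ^ (-(t * n)))]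
  by_cases hN : l + 1 ∈ Set.Ici N
  · rw [Set.indicator_of_mem hN, Set.indicator_of_mem hN]
    refine add_le_add_right ?_ _
    calc _ ≤ 2 * (2 : ℝ) ^ (t' * (l + 1 : ℕ)) * 2 ^ (-(t * (l + 1 : ℕ))) := by
          gcongr
          exact hD (l + 1)
      _ = 2 * (2 ^ (t' - t)) ^ (l + 1) := by
          rw [mul_assoc, ← Real.rpow_add two_pos, ← Real.rpow_mul_natCast two_pos.le]
          ring_nf
  · simp [Set.indicator_of_notMem hN]

open Classical in
theorem exists_sum_words_blockWeight_le_one {D : Set BStr} {t' t : ℝ} (ht : t' < t)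
    (hD : ∀ n, ((words n).filter (· ∈ D)).card ≤ 2 * (2 : ℝ) ^ (t' * n)) :
    ∃ N, ∀ n, ∑ l ∈ Finset.range n, ∑ x ∈ words (l + 1), blockWeight D t N x ≤ 1 := by
  set θ : ℝ := 2 ^ (t' - t)
  have h0 : 0 ≤ θ := by positivity
  have h1 : θ < 1 := Real.rpow_lt_one_of_one_lt_of_neg one_lt_two (by linarith)
  obtain ⟨N, hN⟩ := exists_pow_lt_of_lt_one (show 0 < 3 / 8 * (1 - θ) by linarith) h1
  refine ⟨N, fun n => ?_⟩
  have hbits : ∑ l ∈ Finset.range n, (if l = 0 then (1 / 4 : ℝ) else 0) ≤ 1 / 4 := by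
    rw [Finset.sum_ite_eq' (Finset.range n) 0]
    split_ifs <;> norm_num
  calc ∑ l ∈ Finset.range n, ∑ x ∈ words (l + 1), blockWeight D t N x
      ≤ ∑ l ∈ Finset.range n,
          ((if l = 0 then 1 / 4 else 0) + 2 * (Set.Ici N).indicator (θ ^ ·) (l + 1)) :=
        Finset.sum_le_sum fun l _ => sum_words_blockWeight_le hD t N l
    _ ≤ 1 / 4 + 2 * (θ ^ N / (1 - θ)) := by
        rw [Finset.sum_add_distrib, ← Finset.mul_sum]
        gcongr
        exact sum_range_indicator_Ici_pow_le h0 h1 N n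
    _ ≤ 1 := by
        have htail := (div_lt_iff₀ (by linarith)).2 hN
        linarith

open Classical in
theorem exists_measure_exists_seg_mem_lt_one (hρ : MeasurePreserving shift ρ ρ)
    (hs : Tendsto (entropyAt ρ) atTop (nhds s)) (hts : t < s) {D : Set BStr}
    (hD : ∀ n, ((words n).filter (· ∈ D)).card ≤ 2 * (2 : ℝ) ^ (t * n)) :
    ∃ N, ρ {Z | ∃ n ≥ N, seg Z n ∈ D} < 1 := by
  obtain ⟨t', htt', ht's⟩ := exists_between hts
  obtain ⟨N, hN⟩ := exists_sum_words_blockWeight_le_one htt' hD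
  refine ⟨N + 1, not_le.1 fun hone => ht's.not_ge ?_⟩
  have hmeas : MeasurableSet {Z | ∃ n ≥ N + 1, seg Z n ∈ D} := by
    simp only [Set.ofPred_exists]
    exact MeasurableSet.iUnion fun n => (MeasurableSet.const _).inter (measurableSet_seg (· ∈ D) n)
  have hfull := (prob_compl_eq_zero_iff hmeas).2 (le_antisymm prob_le_one hone)
  refine le_of_ae_exists_seg_mem hρ hs (blockWeight_nonneg D t' N) hN
    (show 0 ≤ 3 + |t'| by positivity) (fun b => ?_) (E := {x | x ∈ D ∧ N ≤ x.length})
    (fun y hy => ?_) ?_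
  · have hpow : (2 : ℝ) ^ (-(t' + (3 + |t'|))) ≤ 1 / 8 := by
      have hle : (2 : ℝ) ^ (-(t' + (3 + |t'|))) ≤ 2 ^ (-3 : ℝ) := by
        gcongr
        · norm_num
        · linarith [neg_abs_le t']
      refine hle.trans_eq ?_
      rw [Real.rpow_neg two_pos.le]
      norm_num
    refine hpow.trans ?_
    rw [blockWeight, Set.indicator_of_mem (by simp)]
    exact le_add_of_nonneg_right (Set.indicator_nonneg (fun _ _ => by positivity) _)
  · rw [blockWeight, Set.indicator_of_mem hy]
    exact le_add_of_nonneg_left (Set.indicator_nonneg (fun _ _ => by norm_num) _)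
  · filter_upwards [compl_mem_ae_iff.2 hfull] with Z hZ
    obtain ⟨n, hn, hZn⟩ := Set.notMem_compl_iff.1 hZ
    exact ⟨n, by lia, hZn, by rw [length_seg]; lia⟩

end EntropyLowerBound

section Machines

variable {U : BStr →. BStr}

theorem cpx_le_length {x q : BStr} (h : x ∈ U q) : cpx U x ≤ q.length :=
  Nat.sInf_le ⟨q, rfl, h⟩

theorem exists_length_eq_cpx_of_mem {x q : BStr} (h : x ∈ U q) :
    ∃ p, p.length = cpx U x ∧ x ∈ U p :=
  Nat.sInf_mem (s := {n | ∃ q : BStr, q.length = n ∧ x ∈ U q}) ⟨_, q, rfl, h⟩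

theorem UniversalPlain.exists_cpx_le (hU : UniversalPlain U) {M : BStr →. BStr} (hM : Partrec M) :
    ∃ c : ℕ, ∀ p x, x ∈ M p → cpx U x ≤ p.length + c := by
  obtain ⟨c, hc⟩ := hU.2 M hM
  refine ⟨c, fun p x hx => ?_⟩
  obtain ⟨q, hq, hxq⟩ := hc p x hx
  exact (cpx_le_length hxq).trans hq

theorem UniversalPlain.exists_cpx_le_length_add (hU : UniversalPlain U) :
    ∃ c : ℕ, ∀ x, cpx U x ≤ x.length + c := by
  obtain ⟨c, hc⟩ := hU.exists_cpx_le (M := fun p => Part.some p) Computable.id.partrec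
  exact ⟨c, fun x => hc x x (Part.mem_some _)⟩

theorem UniversalPlain.exists_length_eq_cpx (hU : UniversalPlain U) (x : BStr) :
    ∃ p, p.length = cpx U x ∧ x ∈ U p := by
  obtain ⟨c, hc⟩ := hU.2 (fun p => Part.some p) Computable.id.partrec
  obtain ⟨q, -, hq⟩ := hc x x (Part.mem_some _)
  exact exists_length_eq_cpx_of_mem hq

theorem UniversalPlain.exists_cpx_drop_le (hU : UniversalPlain U) (i : ℕ) :
    ∃ c : ℕ, ∀ x : BStr, cpx U (x.drop i) ≤ cpx U x + c := by
  have hdrop : Computable fun q : BStr × BStr => q.2.drop i := by fun_prop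
  obtain ⟨c, hc⟩ := hU.exists_cpx_le (hU.1.map hdrop.to₂)
  refine ⟨c, fun x => ?_⟩
  obtain ⟨p, hp, hxp⟩ := hU.exists_length_eq_cpx x
  exact hp ▸ hc p _ (Part.mem_map _ hxp)

end Machines

section Semidecidable

variable {α β : Type*} [Primcodable α] [Primcodable β]

theorem exists_computable_mem_iff_of_partrec {f : α →. β} (hf : Partrec f) :
    ∃ R : α → β → ℕ → Bool, (Computable fun q : (α × β) × ℕ => R q.1.1 q.1.2 q.2) ∧
      ∀ a b, b ∈ f a ↔ ∃ k, R a b k = true := by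
  obtain ⟨c, hc⟩ := Nat.Partrec.Code.exists_code.1 hf
  refine ⟨fun a b k => decide (Nat.Partrec.Code.evaln k c (Encodable.encode a) =
    some (Encodable.encode b)), ?_, fun a b => ?_⟩
  · have hrun : Computable fun q : (α × β) × ℕ =>
        Nat.Partrec.Code.evaln q.2 c (Encodable.encode q.1.1) :=
      Nat.Partrec.Code.primrec_evaln.to_comp.comp
        (by fun_prop : Computable fun q : (α × β) × ℕ => ((q.2, c), Encodable.encode q.1.1))
    have hsome : Computable fun q : (α × β) × ℕ => some (Encodable.encode q.1.2) :=
      Computable.option_some.comp (by fun_prop)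
    fun_prop
  · have hmem : b ∈ f a ↔ Encodable.encode b ∈ Nat.Partrec.Code.eval c (Encodable.encode a) := by
      simp [hc]
    simp [hmem, Nat.Partrec.Code.evaln_complete]

theorem exists_computable_iff_of_rePred {p : α → Prop} (hp : REPred p) :
    ∃ P : α → ℕ → Bool, (Computable fun q : α × ℕ => P q.1 q.2) ∧ ∀ a, p a ↔ ∃ k, P a k = true := by
  obtain ⟨R, hR, hRp⟩ := exists_computable_mem_iff_of_partrec hp
  refine ⟨fun a => R a (), hR.comp (by fun_prop : Computable fun q : α × ℕ => ((q.1, ()), q.2)),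
    fun a => ?_⟩
  simp [← hRp, Part.mem_assert_iff]

theorem rePred_exists {P : α → β → Prop} [∀ a b, Decidable (P a b)]
    (hP : Computable fun q : α × β => decide (P q.1 q.2)) : REPred fun a => ∃ b, P a b := by
  have htest : Computable₂ fun (a : α) (k : ℕ) =>
      ((Encodable.decode k : Option β).map fun b => decide (P a b)).getD false :=
    Computable.option_getD (Computable.option_map (Computable.decode.comp Computable.snd)
      (hP.comp (by fun_prop : Computable fun q : (α × ℕ) × β => (q.1.1, q.2))).to₂)
      (Computable.const false)
  refine (Partrec.rfind htest.partrec₂).dom_re.of_eq fun a => ?_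
  refine Nat.rfind_dom'.trans ⟨?_, ?_⟩
  · rintro ⟨k, hk, -⟩
    rcases hb : (Encodable.decode k : Option β) with _ | b
    · simp [hb] at hk
    · exact ⟨b, by simpa [hb] using hk⟩
  · rintro ⟨b, hb⟩
    exact ⟨Encodable.encode b, by simpa using hb, fun _ => trivial⟩

end Semidecidable

theorem MLAC.ae_exists_forall_seg_notMem {μ ρ : Measure Cantor} [IsProbabilityMeasure ρ]
    (hμ : MLAC μ ρ) (hρ : ComputableMeasure ρ) (herg : Ergodic shift ρ) {D : Set BStr}
    (hD : REPred (· ∈ D)) {N : ℕ} (hlt : ρ {Z | ∃ n ≥ N, seg Z n ∈ D} < 1) :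
    ∀ᵐ Z ∂μ, ∃ i, ∀ n ≥ N, seg (shift^[i] Z) n ∉ D := by
  obtain ⟨P, hP, hDP⟩ := exists_computable_iff_of_rePred hD
  let S : BStr → Bool := fun x => decide (∃ n < x.length + 1, N ≤ n ∧
    ∃ k < x.length, P (x.take n) k = true)
  have hS : Computable S := by
    have hP' : Computable fun q : (BStr × ℕ) × ℕ => decide (P (q.1.1.take q.1.2) q.2 = true) :=
      (hP.comp (by fun_prop : Computable fun q : (BStr × ℕ) × ℕ =>
        (q.1.1.take q.1.2, q.2))).of_eq fun q => by simp
    refine computable_decide_exists_lt (computable_decide_and (by fun_prop) ?_) (by fun_prop)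
    exact computable_decide_exists_lt hP' (by fun_prop)
  have hmono : ∀ x y : BStr, x <+: y → S x = true → S y = true := by
    rintro x _ ⟨z, rfl⟩ hx
    obtain ⟨n, hn, hNn, k, hk, hPk⟩ := of_decide_eq_true hx
    refine decide_eq_true ⟨n, by grind, hNn, k, by grind, ?_⟩
    rwa [List.take_append_of_le_length (by lia)]
  have hopen : generatedOpen S = {Z | ∃ n ≥ N, seg Z n ∈ D} := by
    ext Z
    simp only [generatedOpen, S, Set.mem_ofPred_eq, decide_eq_true_eq, length_seg, hDP]
    constructor
    · rintro ⟨m, n, hn, hNn, k, -, hk⟩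
      exact ⟨n, hNn, k, by rwa [take_seg Z (by lia)] at hk⟩
    · rintro ⟨n, hNn, k, hk⟩
      exact ⟨n + k + 1, n, by lia, hNn, k, by lia, by rwa [take_seg Z (by lia)]⟩
  have hnull := hμ.measure_forall_iterate_shift_mem_eq_zero hρ herg hS hmono (hopen ▸ hlt)
  filter_upwards [compl_mem_ae_iff.2 hnull] with Z hZ
  simpa [hopen] using hZ

section LowerBound

variable {U : BStr →. BStr}

/-- The strings `x` with a `U`-description of length less than `(a / b) * |x|`. -/
def compressibleStrings (U : BStr →. BStr) (a b : ℕ) : Set BStr :=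
  {x | ∃ q : BStr, b * q.length < a * x.length ∧ x ∈ U q}

open Classical in
theorem card_filter_exists_description_le (U : BStr →. BStr) (n J : ℕ) :
    ((words n).filter fun x => ∃ q : BStr, q.length < J ∧ x ∈ U q).card ≤ 2 ^ J := by
  choose! q hq hxq using fun x (hx : ∃ q : BStr, q.length < J ∧ x ∈ U q) => hx
  have hmaps : ∀ x ∈ (words n).filter fun x => ∃ q : BStr, q.length < J ∧ x ∈ U q,
      q x ∈ (Finset.range J).biUnion words := fun x hx => by
    simpa using hq x (Finset.mem_filter.1 hx).2
  refine (Finset.card_le_card_of_injOn q hmaps fun x hx y hy hxy => ?_).trans ?_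
  · exact Part.mem_unique (hxq x (Finset.mem_filter.1 hx).2)
      (hxy ▸ hxq y (Finset.mem_filter.1 hy).2)
  · refine Finset.card_biUnion_le.trans ?_
    simpa using (Nat.geomSum_lt le_rfl (n := J) (s := Finset.range J) (by simp)).le

open Classical in
theorem card_filter_compressibleStrings_le (U : BStr →. BStr) (a : ℕ) {b : ℕ} (hb : 0 < b)
    (n : ℕ) : ((words n).filter (· ∈ compressibleStrings U a b)).card ≤
      2 * (2 : ℝ) ^ ((a / b : ℝ) * n) := by
  have hb' : (0 : ℝ) < b := Nat.cast_pos.2 hb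
  set J := ⌈(a / b : ℝ) * n⌉₊
  have hsub : (words n).filter (· ∈ compressibleStrings U a b) ⊆
      (words n).filter fun x => ∃ q : BStr, q.length < J ∧ x ∈ U q := by
    rintro x hx
    obtain ⟨hxn, q, hq, hxq⟩ := Finset.mem_filter.1 hx
    rw [mem_words.1 hxn] at hq
    refine Finset.mem_filter.2 ⟨hxn, q, Nat.lt_ceil.2 ?_, hxq⟩
    rw [div_mul_eq_mul_div, lt_div_iff₀' hb']
    exact_mod_cast hq
  calc (((words n).filter (· ∈ compressibleStrings U a b)).card : ℝ) ≤ (2 ^ J : ℕ) :=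
        Nat.cast_le.2 ((Finset.card_le_card hsub).trans (card_filter_exists_description_le U n J))
    _ = (2 : ℝ) ^ (J : ℝ) := by simp
    _ ≤ 2 ^ ((a / b : ℝ) * n + 1) := by
        gcongr
        · norm_num
        · exact (Nat.ceil_lt_add_one (by positivity)).le
    _ = 2 * 2 ^ ((a / b : ℝ) * n) := by
        rw [Real.rpow_add two_pos, Real.rpow_one, mul_comm]

theorem rePred_mem_compressibleStrings (hU : Partrec U) (a b : ℕ) :
    REPred (· ∈ compressibleStrings U a b) := by
  obtain ⟨R, hR, hUR⟩ := exists_computable_mem_iff_of_partrec hU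
  have hP : Computable fun q : BStr × BStr × ℕ =>
      decide (b * q.2.1.length < a * q.1.length ∧ R q.2.1 q.1 q.2.2 = true) := by
    refine computable_decide_and (by fun_prop) ?_
    exact (hR.comp (by fun_prop : Computable fun q : BStr × BStr × ℕ =>
      ((q.2.1, q.1), q.2.2))).of_eq fun q => by simp
  refine (rePred_exists (P := fun (x : BStr) (r : BStr × ℕ) =>
    b * r.1.length < a * x.length ∧ R r.1 x r.2 = true) hP).of_eq fun x => ?_
  simp [compressibleStrings, hUR]

theorem UniversalPlain.mul_le_mul_cpx_of_notMem (hU : UniversalPlain U) {a b : ℕ} {x : BStr}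
    (hx : x ∉ compressibleStrings U a b) : a * x.length ≤ b * cpx U x := by
  obtain ⟨q, hq, hxq⟩ := hU.exists_length_eq_cpx x
  exact not_lt.1 fun hlt => hx ⟨q, hq ▸ hlt, hxq⟩

theorem UniversalPlain.eventually_mul_le_cpx_seg (hU : UniversalPlain U) {a b N i : ℕ} (hb : 0 < b)
    {t : ℝ} (ht : t < a / b) {Z : Cantor}
    (hZ : ∀ n ≥ N, seg (shift^[i] Z) n ∉ compressibleStrings U a b) :
    ∀ᶠ n : ℕ in atTop, t * n ≤ cpx U (seg Z n) := by
  have hb' : (0 : ℝ) < b := Nat.cast_pos.2 hb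
  obtain ⟨c, hc⟩ := hU.exists_cpx_drop_le i
  have hlim : Tendsto (fun n : ℕ => (a / b - t) * (n : ℝ)) atTop atTop :=
    tendsto_natCast_atTop_atTop.const_mul_atTop (sub_pos.2 ht)
  filter_upwards [eventually_ge_atTop (N + i), hlim.eventually_ge_atTop (a / b * i + c : ℝ)]
    with n hn hlarge
  have hdrop : cpx U (seg (shift^[i] Z) (n - i)) ≤ cpx U (seg Z n) + c := drop_seg Z n i ▸ hc _
  have htail := hU.mul_le_mul_cpx_of_notMem (hZ (n - i) (by lia))
  rw [length_seg] at htail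
  have hcast : (a : ℝ) * (n - i) ≤ b * (cpx U (seg Z n) + c) := by
    rw [← Nat.cast_sub (by lia)]
    exact_mod_cast htail.trans (Nat.mul_le_mul_left b hdrop)
  have hdiv : (a / b : ℝ) * (n - i) ≤ cpx U (seg Z n) + c := by
    rwa [div_mul_eq_mul_div, div_le_iff₀' hb']
  linarith

theorem MLAC.ae_eventually_mul_le_cpx {μ ρ : Measure Cantor} [IsProbabilityMeasure ρ]
    (hμ : MLAC μ ρ) (hU : UniversalPlain U) (hρ : ComputableMeasure ρ) (herg : Ergodic shift ρ)
    {s t : ℝ} (hs : Tendsto (entropyAt ρ) atTop (nhds s)) (hts : t < s) :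
    ∀ᵐ Z ∂μ, ∀ᶠ n : ℕ in atTop, t * n ≤ cpx U (seg Z n) := by
  rcases lt_or_ge t 0 with ht | ht
  · exact ae_of_all _ fun Z => Eventually.of_forall fun n =>
      (mul_nonpos_of_nonpos_of_nonneg ht.le (Nat.cast_nonneg _)).trans (Nat.cast_nonneg _)
  obtain ⟨r, htr, hrs⟩ := exists_rat_btwn hts
  lift r to ℚ≥0 using Rat.cast_nonneg.1 (ht.trans htr.le)
  have hr : ((r : ℚ) : ℝ) = r.num / r.den := by rw [Rat.cast_nnratCast, NNRat.cast_def]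
  rw [hr] at htr hrs
  obtain ⟨N, hN⟩ := exists_measure_exists_seg_mem_lt_one herg.toMeasurePreserving hs hrs
    (card_filter_compressibleStrings_le U r.num r.den_pos)
  filter_upwards [hμ.ae_exists_forall_seg_notMem hρ herg
    (rePred_mem_compressibleStrings hU.1 r.num r.den) hN] with Z ⟨i, hi⟩
  exact hU.eventually_mul_le_cpx_seg r.den_pos htr hi

end LowerBound

section SelfDelimiting

/-- The self-delimiting code `1^r 0 1^(n - r²) 0` of `n`, where `r = √n`. Its length is `O(√n)`, so
prefixing a string of length `n` with it is asymptotically free. -/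
def lengthHeader (n : ℕ) : BStr :=
  List.replicate n.sqrt true ++ false :: (List.replicate (n - n.sqrt * n.sqrt) true ++ [false])

/-- The string obtained from `p` by dropping everything up to its first `0`. -/
def dropBlock (p : BStr) : BStr := p.drop (p.idxOf false + 1)

/-- The number coded by the header of `p`; it inverts `lengthHeader`. -/
def headerValue (p : BStr) : ℕ :=
  p.idxOf false * p.idxOf false + (dropBlock p).idxOf false

/-- The string obtained from `p` by dropping its header. -/
def dropHeader (p : BStr) : BStr := dropBlock (dropBlock p)

theorem idxOf_false_replicate_append (r : ℕ) (y : BStr) :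
    (List.replicate r true ++ false :: y).idxOf false = r := by
  rw [List.idxOf_append_of_notMem (by simp)]
  simp

theorem dropBlock_replicate_append (r : ℕ) (y : BStr) :
    dropBlock (List.replicate r true ++ false :: y) = y := by
  simp [dropBlock, idxOf_false_replicate_append, List.drop_append]

@[simp]
theorem headerValue_lengthHeader_append (n : ℕ) (y : BStr) :
    headerValue (lengthHeader n ++ y) = n := by
  simp only [headerValue, lengthHeader, List.append_assoc, List.cons_append, List.nil_append,
    idxOf_false_replicate_append, dropBlock_replicate_append]
  exact Nat.add_sub_of_le (Nat.sqrt_le n)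

@[simp]
theorem dropHeader_lengthHeader_append (n : ℕ) (y : BStr) :
    dropHeader (lengthHeader n ++ y) = y := by
  simp only [dropHeader, lengthHeader, List.append_assoc, List.cons_append, List.nil_append,
    dropBlock_replicate_append]

theorem length_lengthHeader_le (n : ℕ) : (lengthHeader n).length ≤ 3 * n.sqrt + 2 := by
  have hsqrt := Nat.sqrt_le_add n
  simp only [lengthHeader, List.length_append, List.length_replicate, List.length_cons,
    List.length_nil]
  lia

variable {α : Type*} [Primcodable α]

@[fun_prop]
theorem computable_replicate {β : Type*} [Primcodable β] {f : α → ℕ} (hf : Computable f) (b : β) :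
    Computable fun a => List.replicate (f a) b :=
  ((Primrec.list_map Primrec.list_range (Primrec.const b).to₂).to_comp.comp hf).of_eq
    fun a => by simp [List.map_const']

@[fun_prop]
theorem computable_sqrt {f : α → ℕ} (hf : Computable f) : Computable fun a => (f a).sqrt :=
  Primrec.nat_sqrt.to_comp.comp hf

@[fun_prop]
theorem computable_lengthHeader : Computable lengthHeader := by
  unfold lengthHeader
  fun_prop

@[fun_prop]
theorem computable_dropBlock : Computable dropBlock := by
  unfold dropBlock
  fun_prop

@[fun_prop]
theorem computable_headerValue : Computable headerValue := by
  unfold headerValue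
  fun_prop

@[fun_prop]
theorem computable_dropHeader : Computable dropHeader := by
  unfold dropHeader
  fun_prop

variable {U UK : BStr →. BStr}

/-- The prefix-free version of the machine `U`, which reads a program `y` of `U` from the input
`lengthHeader |y| ++ y`. -/
def selfDelimited (U : BStr →. BStr) : BStr →. BStr := fun p =>
  bif decide (p = lengthHeader (dropHeader p).length ++ dropHeader p) then U (dropHeader p)
  else Part.none

theorem partrec_selfDelimited (hU : Partrec U) : Partrec (selfDelimited U) :=
  Partrec.cond (by fun_prop) (hU.comp computable_dropHeader) Partrec.none

theorem prefixFreeDom_selfDelimited (U : BStr →. BStr) : PrefixFreeDom (selfDelimited U) := by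
  have hdom : ∀ p, (selfDelimited U p).Dom → ∃ y : BStr, p = lengthHeader y.length ++ y := by
    intro p hp
    by_contra h
    rw [not_exists] at h
    simp [selfDelimited, h] at hp
  intro p q hp hq hpq
  obtain ⟨y, rfl⟩ := hdom p hp
  obtain ⟨z, rfl⟩ := hdom q hq
  have ⟨w, hw⟩ := hpq
  have hlen : y.length = z.length := by simpa using congrArg headerValue hw
  exact hpq.eq_of_length (by simp [hlen])

theorem mem_selfDelimited {x y : BStr} (h : x ∈ U y) :
    x ∈ selfDelimited U (lengthHeader y.length ++ y) := by
  simpa [selfDelimited] using h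

theorem UniversalPrefixFree.exists_cpx_le_add_sqrt (hUK : UniversalPrefixFree UK)
    (hU : UniversalPlain U) : ∃ c : ℕ, ∀ x, cpx UK x ≤ cpx U x + 3 * (cpx U x).sqrt + c := by
  obtain ⟨c, hc⟩ := hUK.2.2 _ (partrec_selfDelimited hU.1) (prefixFreeDom_selfDelimited U)
  refine ⟨c + 2, fun x => ?_⟩
  obtain ⟨y, hy, hxy⟩ := hU.exists_length_eq_cpx x
  obtain ⟨q, hq, hxq⟩ := hc _ _ (mem_selfDelimited hxy)
  have hcpx := cpx_le_length hxq
  have hheader := length_lengthHeader_le (cpx U x)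
  rw [List.length_append, hy] at hq
  lia

theorem UniversalPlain.exists_cpx_le_cpx_prefixFree (hU : UniversalPlain U)
    (hUK : UniversalPrefixFree UK) : ∃ c : ℕ, ∀ x, cpx U x ≤ cpx UK x + c := by
  obtain ⟨c, hc⟩ := hU.exists_cpx_le hUK.1
  obtain ⟨_, hc'⟩ := hUK.2.2 _ (partrec_selfDelimited hU.1) (prefixFreeDom_selfDelimited U)
  refine ⟨c, fun x => ?_⟩
  obtain ⟨y, -, hxy⟩ := hU.exists_length_eq_cpx x
  obtain ⟨q, -, hxq⟩ := hc' _ _ (mem_selfDelimited hxy)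
  obtain ⟨p, hp, hxp⟩ := exists_length_eq_cpx_of_mem hxq
  exact hp ▸ hc p x hxp

-- The program consists of the self-delimited length of `x` and the index of `x` among the strings
-- of that length in `A`.
theorem UniversalPlain.exists_cpx_le_of_card_le (hU : UniversalPlain U) {A : BStr → Prop}
    [DecidablePred A] (hA : Computable fun x => decide (A x)) :
    ∃ c : ℕ, ∀ J : ℕ, ∀ x, A x → ((words x.length).filter A).card ≤ 2 ^ J →
      cpx U x ≤ J + 3 * x.length.sqrt + c := by
  let M : BStr → BStr := fun p => ((bitStrings (headerValue p)).filter A).getD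
    ((bitStrings (dropHeader p).length).idxOf (dropHeader p)) []
  have hM : Computable M := by fun_prop
  obtain ⟨c, hc⟩ := hU.exists_cpx_le hM.partrec
  refine ⟨c + 2, fun J x hx hcard => ?_⟩
  set l := (bitStrings x.length).filter A
  have hmem : x ∈ l := by simp [l, hx]
  have hlen : l.length = ((words x.length).filter A).card := by
    rw [← List.toFinset_card_of_nodup ((nodup_bitStrings _).filter _)]
    congr 1
    ext z
    simp
  have hidx : l.idxOf x < (bitStrings J).length := by
    rw [length_bitStrings]
    exact (List.idxOf_lt_length_iff.2 hmem).trans_le (hlen.trans_le hcard)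
  set y := (bitStrings J)[l.idxOf x]
  have hy : y.length = J := mem_bitStrings.1 (List.getElem_mem hidx)
  have hMy : M (lengthHeader x.length ++ y) = x := by
    simp only [M, headerValue_lengthHeader_append, dropHeader_lengthHeader_append, hy]
    rw [(nodup_bitStrings J).idxOf_getElem _ hidx,
      List.getD_eq_getElem _ _ (List.idxOf_lt_length_iff.2 hmem), List.getElem_idxOf]
  have hcpx := hc (lengthHeader x.length ++ y) x (Part.mem_some_iff.2 hMy.symm)
  have hheader := length_lengthHeader_le x.length
  rw [List.length_append, hy] at hcpx
  lia

end SelfDelimiting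

section BlockCodes

theorem exists_succ_mul_sub_mul_lt {u : ℕ → ℝ} {s v : ℝ} (hu : Tendsto u atTop (nhds s))
    (hsv : s < v) : ∃ k : ℕ, (k + 1 : ℕ) * u (k + 1) - k * u k < v := by
  by_contra! hincr
  have hlin (n : ℕ) : n * v ≤ n * u n := by
    induction n with
    | zero => simp
    | succ n ih =>
      rw [Nat.cast_succ, add_one_mul, ← Nat.cast_succ]
      linarith [hincr n]
  refine hsv.not_ge (ge_of_tendsto hu ?_)
  filter_upwards [eventually_gt_atTop 0] with n hn
  exact le_of_mul_le_mul_left (hlin n) (Nat.cast_pos.2 hn)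

theorem tendsto_mul_logb_add {p : ℝ} (c : ℝ) :
    Tendsto (fun η => Real.logb 2 (p + c * η) * p) (nhds 0) (nhds (Real.logb 2 p * p)) := by
  obtain rfl | hp := eq_or_ne p 0
  · simp
  · have hcont : ContinuousAt (fun η => Real.logb 2 (p + c * η) * p) 0 := by
      unfold Real.logb
      have hne : p + c * 0 ≠ 0 := by simpa using hp
      fun_prop (disch := assumption)
    simpa using hcont.tendsto

/-- The `ρ`-probability that `x.tail` is preceded by the first bit of `x`, smoothed by `η` so that
it is positive even where `ρ (cyl x) = 0`. -/
noncomputable def smoothedConditional (ρ : Measure Cantor) (η : ℝ) (x : BStr) : ℝ :=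
  (ρ.real (cyl x) + η) / (ρ.real (cyl x.tail) + 2 * η)

theorem smoothedConditional_pos (ρ : Measure Cantor) {η : ℝ} (hη : 0 < η) (x : BStr) :
    0 < smoothedConditional ρ η x := by
  unfold smoothedConditional
  positivity

variable {ρ : Measure Cantor} [IsProbabilityMeasure ρ]

theorem smoothedConditional_false_add_true (hρ : MeasurePreserving shift ρ ρ) {η : ℝ} (hη : 0 < η)
    (x : BStr) :
    smoothedConditional ρ η (false :: x) + smoothedConditional ρ η (true :: x) = 1 := by
  unfold smoothedConditional
  rw [List.tail_cons, List.tail_cons, ← add_div, div_eq_one_iff_eq (by positivity),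
    ← measureReal_cyl_false_add_true hρ x]
  ring

theorem tendsto_integral_logb_add (ρ : Measure Cantor) [IsProbabilityMeasure ρ] (c : ℝ) (n : ℕ) :
    Tendsto (fun η => ∫ Z, Real.logb 2 (ρ.real (cyl (seg Z n)) + c * η) ∂ρ) (nhds 0)
      (nhds (-(n * entropyAt ρ n))) := by
  have hsum (η : ℝ) := integral_comp_seg ρ (fun x => Real.logb 2 (ρ.real (cyl x) + c * η)) n
  rw [mul_entropyAt, integral_neg, neg_neg,
    integral_comp_seg ρ fun x => Real.logb 2 (ρ.real (cyl x))]
  simp only [hsum]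
  exact tendsto_finsetSum _ fun x _ => tendsto_mul_logb_add c

theorem integral_neg_logb_smoothedConditional (hρ : MeasurePreserving shift ρ ρ) {η : ℝ}
    (hη : 0 < η) (k : ℕ) :
    ∫ Z, -Real.logb 2 (smoothedConditional ρ η (seg Z (k + 1))) ∂ρ =
      ∫ Z, Real.logb 2 (ρ.real (cyl (seg Z k)) + 2 * η) ∂ρ -
        ∫ Z, Real.logb 2 (ρ.real (cyl (seg Z (k + 1))) + 1 * η) ∂ρ := by
  have hint := integrable_comp_seg ρ (fun x => Real.logb 2 (ρ.real (cyl x) + 2 * η)) k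
  have hshift : Integrable (fun Z => Real.logb 2 (ρ.real (cyl (seg (shift Z) k)) + 2 * η)) ρ :=
    hρ.integrable_comp_of_integrable hint
  rw [← integral_comp_measurePreserving hρ hint.aestronglyMeasurable,
    ← integral_sub hshift (integrable_comp_seg ρ (fun x => Real.logb 2 (ρ.real (cyl x) + 1 * η)) _)]
  refine integral_congr_ae (ae_of_all _ fun Z => ?_)
  simp only [smoothedConditional]
  rw [Real.logb_div (by positivity) (by positivity), neg_sub, one_mul, seg_succ, List.tail_cons]

theorem exists_conditional_integral_neg_logb_lt (hρ : MeasurePreserving shift ρ ρ) {s v : ℝ}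
    (hs : Tendsto (entropyAt ρ) atTop (nhds s)) (hsv : s < v) :
    ∃ (k : ℕ) (q : BStr → ℝ), (∀ x, 0 < q x) ∧ (∀ x, q (false :: x) + q (true :: x) = 1) ∧
      ∫ Z, -Real.logb 2 (q (seg Z (k + 1))) ∂ρ < v := by
  obtain ⟨k, hk⟩ := exists_succ_mul_sub_mul_lt hs hsv
  have hlim := (tendsto_integral_logb_add ρ 2 k).sub (tendsto_integral_logb_add ρ 1 (k + 1))
  rw [neg_sub_neg] at hlim
  obtain ⟨η, hlt, hη : 0 < η⟩ := (((hlim.mono_left nhdsWithin_le_nhds).eventually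
    (gt_mem_nhds hk)).and (self_mem_nhdsWithin (s := Set.Ioi 0))).exists
  exact ⟨k, smoothedConditional ρ η, smoothedConditional_pos ρ hη,
    smoothedConditional_false_add_true hρ hη,
    (integral_neg_logb_smoothedConditional hρ hη k).trans_lt hlt⟩

theorem exists_computable_eq_on_words (n : ℕ) (g : BStr → ℕ) :
    ∃ g' : BStr → ℕ, Computable g' ∧ ∀ x, x.length = n → g' x = g x := by
  refine ⟨fun x => ((bitStrings n).map g).getD ((bitStrings n).idxOf x) 0, by fun_prop,
    fun x hx => ?_⟩
  have hidx := List.idxOf_lt_length_iff.2 (mem_bitStrings.2 hx)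
  simp only
  rw [List.getD_eq_getElem _ _ (by rwa [List.length_map]), List.getElem_map, List.getElem_idxOf]

theorem rpow_neg_inv_pow_ceil_le {q D : ℝ} (hq : 0 < q) (hD : 0 < D) :
    ((2 : ℝ) ^ (-D⁻¹)) ^ ⌈D * -Real.logb 2 q⌉₊ ≤ q := by
  rw [← Real.rpow_mul_natCast two_pos.le,
    ← Real.le_logb_iff_rpow_le one_lt_two hq, neg_mul, neg_le, inv_mul_eq_div, le_div_iff₀' hD]
  exact Nat.le_ceil _

theorem integral_ceil_comp_seg_le (μ : Measure Cantor) [IsProbabilityMeasure μ] {F : BStr → ℝ}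
    {n : ℕ} (hF : ∀ Z, 0 ≤ F (seg Z n)) :
    ∫ Z, (⌈F (seg Z n)⌉₊ : ℝ) ∂μ ≤ ∫ Z, F (seg Z n) ∂μ + 1 :=
  calc _ ≤ ∫ Z, (F (seg Z n) + 1) ∂μ :=
        integral_mono (integrable_comp_seg μ (fun x => (⌈F x⌉₊ : ℝ)) n)
          ((integrable_comp_seg μ F n).add (integrable_const 1))
          fun Z => (Nat.ceil_lt_add_one (hF Z)).le
    _ = _ := by rw [integral_add (integrable_comp_seg μ F n) (integrable_const 1)]; simp

-- Costs are measured in units of `1 / D` bits, so that rounding up loses at most `3 / D` bits.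
theorem exists_block_code (hρ : MeasurePreserving shift ρ ρ) {s u : ℝ}
    (hs : Tendsto (entropyAt ρ) atTop (nhds s)) (hsu : s < u) :
    ∃ (k m : ℕ) (g : BStr → ℕ) (r : ℝ), Computable g ∧ ∫ Z, (g (seg Z (k + 1)) : ℝ) ∂ρ < m ∧
      0 < r ∧ r ≤ 1 ∧ 2 ^ (-u) ≤ r ^ (m + 1) ∧
      ∀ x : BStr, x.length = k → r ^ g (false :: x) + r ^ g (true :: x) ≤ 1 := by
  obtain ⟨v, hsv, hvu⟩ := exists_between hsu
  obtain ⟨k, q, hq, hq1, hqv⟩ := exists_conditional_integral_neg_logb_lt hρ hs hsv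
  obtain ⟨D, hD⟩ := exists_nat_gt (3 / (u - v))
  have hD0 : (0 : ℝ) < D := (div_pos three_pos (sub_pos.2 hvu)).trans hD
  obtain ⟨g, hg, hgq⟩ := exists_computable_eq_on_words (k + 1) fun x => ⌈D * -Real.logb 2 (q x)⌉₊
  have hnonneg (Z : Cantor) : 0 ≤ -Real.logb 2 (q (seg Z (k + 1))) := by
    refine neg_nonneg.2 (Real.logb_nonpos one_lt_two (hq _).le ?_)
    rw [seg_succ]
    have hfalse := hq (false :: seg (shift Z) k)
    have htrue := hq (true :: seg (shift Z) k)
    cases Z 0 <;> linarith [hq1 (seg (shift Z) k)]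
  have hint : ∫ Z, (g (seg Z (k + 1)) : ℝ) ∂ρ ≤
      D * ∫ Z, -Real.logb 2 (q (seg Z (k + 1))) ∂ρ + 1 := by
    simp only [hgq _ (length_seg _ _), ← integral_const_mul]
    exact integral_ceil_comp_seg_le ρ (F := fun x => D * -Real.logb 2 (q x)) fun Z =>
      mul_nonneg hD0.le (hnonneg Z)
  have hv0 : 0 < v := (integral_nonneg hnonneg).trans_lt hqv
  have hDv := mul_lt_mul_of_pos_left hqv hD0
  refine ⟨k, ⌈D * v + 1⌉₊, g, 2 ^ (-(D : ℝ)⁻¹), hg, ?_, by positivity,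
    Real.rpow_le_one_of_one_le_of_nonpos one_le_two (by simp), ?_, fun x hx => ?_⟩
  · linarith [Nat.le_ceil (D * v + 1)]
  · have hceil := Nat.ceil_lt_add_one (show 0 ≤ D * v + 1 by positivity)
    rw [div_lt_iff₀ (sub_pos.2 hvu)] at hD
    rw [← Real.rpow_mul_natCast two_pos.le, neg_mul, inv_mul_eq_div]
    refine Real.rpow_le_rpow_of_exponent_le one_le_two (neg_le_neg ((div_le_iff₀' hD0).2 ?_))
    push_cast
    linarith
  · rw [hgq _ (by simp [hx]), hgq _ (by simp [hx]), ← hq1 x]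
    exact add_le_add (rpow_neg_inv_pow_ceil_le (hq _) hD0) (rpow_neg_inv_pow_ceil_le (hq _) hD0)

end BlockCodes

section BlockCost

variable (k : ℕ) (g : BStr → ℕ)

/-- The sum of the costs `g y` of all the factors `y` of length `k + 1` of `x`. With the first `k`
bits given, it is the length of the code for `x` in which each remaining bit is coded given its
`k` neighbours. -/
def blockCost (x : BStr) : ℕ :=
  ∑ i ∈ Finset.range (x.length - k), g ((x.drop i).take (k + 1))

theorem blockCost_eq_zero {x : BStr} (hx : x.length ≤ k) : blockCost k g x = 0 := by
  simp [blockCost, Nat.sub_eq_zero_of_le hx]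

theorem blockCost_cons (b : Bool) {x : BStr} (hx : k ≤ x.length) :
    blockCost k g (b :: x) = g (b :: x.take k) + blockCost k g x := by
  rw [blockCost, List.length_cons, Nat.sub_add_comm hx, Finset.sum_range_succ']
  simp [blockCost, add_comm]

theorem computable_blockCost {g : BStr → ℕ} (hg : Computable g) : Computable (blockCost k g) := by
  unfold blockCost
  fun_prop

variable {k g} in
theorem sum_words_pow_blockCost_le {r : ℝ} (hr : 0 ≤ r)
    (hkraft : ∀ x : BStr, x.length = k → r ^ g (false :: x) + r ^ g (true :: x) ≤ 1) (n : ℕ) :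
    ∑ x ∈ words (k + n), r ^ blockCost k g x ≤ 2 ^ k := by
  induction n with
  | zero =>
    refine (Finset.sum_congr rfl fun x hx => ?_).trans_le (b := ∑ _x ∈ words k, (1 : ℝ)) (by simp)
    rw [blockCost_eq_zero k g (mem_words.1 hx).le, pow_zero]
  | succ n ih =>
    rw [← add_assoc, sum_words_succ]
    refine (Finset.sum_le_sum fun x hx => ?_).trans ih
    have hlen := mem_words.1 hx
    rw [blockCost_cons k g _ (by lia), blockCost_cons k g _ (by lia), pow_add, pow_add, ← add_mul]
    exact mul_le_of_le_one_left (by positivity) (hkraft _ (by simp [hlen]))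

variable {k g} in
theorem card_filter_blockCost_le {r : ℝ} (hr0 : 0 < r) (hr1 : r ≤ 1)
    (hkraft : ∀ x : BStr, x.length = k → r ^ g (false :: x) + r ^ g (true :: x) ≤ 1)
    {M : ℕ} {u : ℝ} (hu : 2 ^ (-u) ≤ r ^ M) {n : ℕ} (hn : k ≤ n) :
    ((words n).filter fun x => blockCost k g x ≤ M * x.length).card ≤ 2 ^ ⌈k + u * n⌉₊ := by
  set S := (words n).filter fun x => blockCost k g x ≤ M * x.length
  have hsub : S ⊆ words n := Finset.filter_subset _ _
  have hpow : (2 : ℝ) ^ (-(u * n)) ≤ r ^ (M * n) := by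
    rw [← neg_mul, Real.rpow_mul_natCast two_pos.le, pow_mul]
    gcongr
  have hsum : S.card * r ^ (M * n) ≤ 2 ^ k := by
    obtain ⟨j, rfl⟩ := Nat.exists_eq_add_of_le hn
    refine le_trans ?_ (sum_words_pow_blockCost_le hr0.le hkraft j)
    refine le_trans ?_ (Finset.sum_le_sum_of_subset_of_nonneg hsub
      fun _ _ _ => by positivity)
    rw [← nsmul_eq_mul]
    refine Finset.card_nsmul_le_sum _ _ _ fun x hx => ?_
    obtain ⟨hlen, hcost⟩ := Finset.mem_filter.1 hx
    exact pow_le_pow_of_le_one hr0.le hr1 (mem_words.1 hlen ▸ hcost)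
  suffices (S.card : ℝ) ≤ 2 ^ ⌈k + u * n⌉₊ by exact_mod_cast this
  calc (S.card : ℝ) = S.card * 2 ^ (-(u * n)) * 2 ^ (u * n) := by
        rw [mul_assoc, ← Real.rpow_add two_pos, neg_add_cancel, Real.rpow_zero, mul_one]
    _ ≤ 2 ^ k * 2 ^ (u * n) := by
        gcongr
        exact (mul_le_mul_of_nonneg_left hpow (Nat.cast_nonneg _)).trans hsum
    _ = 2 ^ (k + u * n : ℝ) := by rw [Real.rpow_add two_pos, Real.rpow_natCast]
    _ ≤ 2 ^ ⌈k + u * n⌉₊ := by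
        rw [← Real.rpow_natCast]
        exact Real.rpow_le_rpow_of_exponent_le one_le_two (Nat.le_ceil _)

theorem blockCost_seg (Z : Cantor) (n : ℕ) :
    blockCost k g (seg Z n) = birkhoffSum shift (fun Z => g (seg Z (k + 1))) (n - k) Z := by
  rw [blockCost, length_seg]
  refine Finset.sum_congr rfl fun i hi => ?_
  have hlt := Finset.mem_range.1 hi
  rw [drop_seg, take_seg _ (by lia)]

theorem birkhoffSum_le_birkhoffSum_of_le {X : Type*} (T : X → X) (f : X → ℕ) {m n : ℕ} (h : m ≤ n)
    (x : X) : birkhoffSum T f m x ≤ birkhoffSum T f n x :=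
  Finset.sum_le_sum_of_subset (Finset.range_mono h)

theorem blockCost_seg_add_le (Z : Cantor) (n L : ℕ) :
    blockCost k g (seg Z n) + blockCost k g (seg (shift^[n] Z) L) ≤
      blockCost k g (seg Z (n + L)) := by
  simp only [blockCost_seg]
  rcases le_total L k with hL | hL
  · rw [Nat.sub_eq_zero_of_le hL, birkhoffSum_zero, add_zero]
    exact birkhoffSum_le_birkhoffSum_of_le _ _ (by lia) Z
  · rw [Nat.add_sub_assoc hL, birkhoffSum_add]
    gcongr
    exact birkhoffSum_le_birkhoffSum_of_le _ _ (Nat.sub_le n k) Z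

theorem blockCost_seg_le_add (Z : Cantor) (i n : ℕ) :
    blockCost k g (seg Z n) ≤ birkhoffSum shift (fun Z => g (seg Z (k + 1))) i Z +
      blockCost k g (seg (shift^[i] Z) (n - i)) := by
  rw [blockCost_seg, blockCost_seg, ← birkhoffSum_add]
  exact birkhoffSum_le_birkhoffSum_of_le _ _ (by lia) Z

variable {ρ : Measure Cantor} [IsProbabilityMeasure ρ]

theorem integral_blockCost_seg_le (hρ : MeasurePreserving shift ρ ρ) (n : ℕ) :
    ∫ Z, (blockCost k g (seg Z n) : ℝ) ∂ρ ≤ n * ∫ Z, (g (seg Z (k + 1)) : ℝ) ∂ρ := by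
  have hcast (Z : Cantor) : (blockCost k g (seg Z n) : ℝ) =
      birkhoffSum shift (fun Z => (g (seg Z (k + 1)) : ℝ)) (n - k) Z := by
    simp [blockCost_seg, birkhoffSum]
  simp only [hcast]
  rw [integral_birkhoffSum hρ (integrable_comp_seg ρ (fun x => (g x : ℝ)) (k + 1))]
  exact mul_le_mul_of_nonneg_right (Nat.cast_le.2 (Nat.sub_le n k))
    (integral_nonneg fun _ => Nat.cast_nonneg _)

theorem isOrbitCost_neg_blockCost (m : ℕ) :
    IsOrbitCost shift (fun L Z => -(blockCost k g (seg Z L) : ℝ))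
      (fun n => {Z | m * n < blockCost k g (seg Z n)}) (-m) m where
  zero_le Z := by simp
  add_le n _ L Z hZ := by
    have hcost : m * n + blockCost k g (seg (shift^[n] Z) L) ≤ blockCost k g (seg Z (n + L)) :=
      (add_le_add_left (le_of_lt hZ) _).trans (blockCost_seg_add_le k g Z n L)
    have hcast : (m * n + blockCost k g (seg (shift^[n] Z) L) : ℝ) ≤
        blockCost k g (seg Z (n + L)) := mod_cast hcost
    linarith
  succ_le L Z := by
    have hcost := (Nat.le_add_left _ _).trans (blockCost_seg_add_le k g Z 1 L)
    rw [neg_add_cancel, zero_add, neg_le_neg_iff, add_comm L]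
    exact_mod_cast hcost

variable {k g} in
theorem measure_exists_mul_lt_blockCost_lt_one (hρ : MeasurePreserving shift ρ ρ) {m : ℕ}
    (hm : ∫ Z, (g (seg Z (k + 1)) : ℝ) ∂ρ < m) :
    ρ {Z | ∃ n ≥ 1, m * n < blockCost k g (seg Z n)} < 1 := by
  refine not_le.1 fun hone => ?_
  have hmeas (n : ℕ) : MeasurableSet {Z | m * n < blockCost k g (seg Z n)} :=
    measurableSet_seg (fun x => m * n < blockCost k g x) n
  have hfull : ∀ᵐ Z ∂ρ, ∃ n ≥ 1, m * n < blockCost k g (seg Z n) := by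
    refine (mem_ae_iff_prob_eq_one ?_).2 (le_antisymm prob_le_one hone)
    simp only [Set.ofPred_exists]
    exact MeasurableSet.iUnion fun n => (MeasurableSet.const _).inter (hmeas n)
  set I := ∫ Z, (g (seg Z (k + 1)) : ℝ) ∂ρ
  obtain ⟨C, hC⟩ := (isOrbitCost_neg_blockCost k g m).exists_integral_le hρ (Nat.cast_nonneg m)
    (fun L => integrable_comp_seg ρ (fun x => -(blockCost k g x : ℝ)) L) hmeas hfull
    (show 0 < (m - I) / 2 by linarith)
  obtain ⟨L, hL⟩ := exists_nat_gt (C / ((m - I) / 2))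
  rw [div_lt_iff₀ (by linarith)] at hL
  have hbound := hC L
  rw [integral_neg] at hbound
  linarith [integral_blockCost_seg_le k g hρ L]

theorem MLAC.ae_eventually_blockCost_le {μ : Measure Cantor} (hμ : MLAC μ ρ)
    (hρ : ComputableMeasure ρ) (herg : Ergodic shift ρ) {k : ℕ} {g : BStr → ℕ} (hg : Computable g)
    {m : ℕ} (hm : ∫ Z, (g (seg Z (k + 1)) : ℝ) ∂ρ < m) :
    ∀ᵐ Z ∂μ, ∀ᶠ n : ℕ in atTop, blockCost k g (seg Z n) ≤ (m + 1) * n := by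
  have hcost := computable_blockCost k hg
  have hD : ComputablePred (· ∈ {x : BStr | m * x.length < blockCost k g x}) :=
    ⟨fun x => inferInstanceAs (Decidable (m * x.length < blockCost k g x)),
      (by fun_prop : Computable fun x => decide (m * x.length < blockCost k g x))⟩
  have hlt : ρ {Z | ∃ n ≥ 1, seg Z n ∈ {x : BStr | m * x.length < blockCost k g x}} < 1 := by
    simpa using measure_exists_mul_lt_blockCost_lt_one herg.toMeasurePreserving hm
  filter_upwards [hμ.ae_exists_forall_seg_notMem hρ herg hD.to_re hlt] with Z ⟨i, hi⟩
  set B := birkhoffSum shift (fun Z => g (seg Z (k + 1))) i Z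
  filter_upwards [eventually_ge_atTop (B + i + 1)] with n hn
  have htail : blockCost k g (seg (shift^[i] Z) (n - i)) ≤ m * (n - i) := by
    simpa using hi (n - i) (by lia)
  calc blockCost k g (seg Z n) ≤ B + blockCost k g (seg (shift^[i] Z) (n - i)) :=
        blockCost_seg_le_add k g Z i n
    _ ≤ n + m * n := by
        gcongr
        · lia
        · exact htail.trans (Nat.mul_le_mul_left m (Nat.sub_le n i))
    _ = (m + 1) * n := by ring

end BlockCost

section Convergence

variable {U UK : BStr →. BStr} {ρ μ : Measure Cantor} [IsProbabilityMeasure ρ] {s : ℝ}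

theorem tendsto_natSqrt_div : Tendsto (fun n : ℕ => (n.sqrt : ℝ) / n) atTop (nhds 0) := by
  have hroot : Tendsto (fun n : ℕ => (Real.sqrt n)⁻¹) atTop (nhds 0) :=
    tendsto_inv_atTop_zero.comp (Real.tendsto_sqrt_atTop.comp tendsto_natCast_atTop_atTop)
  refine squeeze_zero (fun n => by positivity) (fun n => ?_) hroot
  rw [← Real.sqrt_div_self]
  gcongr
  exact Real.nat_sqrt_le_real_sqrt

theorem tendsto_three_mul_natSqrt_add_div (C : ℝ) :
    Tendsto (fun n : ℕ => (3 * (n.sqrt : ℝ) + C) / n) atTop (nhds 0) := by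
  have hlim := (tendsto_natSqrt_div.const_mul 3).add (tendsto_const_div_atTop_nhds_zero_nat C)
  simpa only [mul_zero, add_zero, mul_div_assoc, add_div] using hlim

theorem MLAC.ae_eventually_cpx_le_mul (hμ : MLAC μ ρ) (hU : UniversalPlain U)
    (hρ : ComputableMeasure ρ) (herg : Ergodic shift ρ)
    (hs : Tendsto (entropyAt ρ) atTop (nhds s)) {u : ℝ} (hsu : s < u) :
    ∀ᵐ Z ∂μ, ∀ᶠ n : ℕ in atTop, (cpx U (seg Z n) : ℝ) ≤ u * n := by
  obtain ⟨v, hsv, hvu⟩ := exists_between hsu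
  obtain ⟨k, m, g, r, hg, hm, hr0, hr1, hvr, hkraft⟩ :=
    exists_block_code herg.toMeasurePreserving hs hsv
  have hv : 0 ≤ v := by
    have hpow := hvr.trans (pow_le_one₀ hr0.le hr1)
    contrapose! hpow
    exact Real.one_lt_rpow one_lt_two (neg_pos.2 hpow)
  have hcost := computable_blockCost k hg
  obtain ⟨c, hc⟩ := hU.exists_cpx_le_of_card_le (A := fun x => blockCost k g x ≤ (m + 1) * x.length)
    (by fun_prop)
  have hsmall := (tendsto_three_mul_natSqrt_add_div (k + 1 + c)).eventually
    (ge_mem_nhds (sub_pos.2 hvu))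
  filter_upwards [hμ.ae_eventually_blockCost_le hρ herg hg hm] with Z hZ
  filter_upwards [hZ, hsmall, eventually_ge_atTop k, eventually_gt_atTop 0] with n hn hsqrt hk h0
  have hcpx : cpx U (seg Z n) ≤ ⌈k + v * n⌉₊ + 3 * n.sqrt + c := by
    simpa using hc ⌈k + v * n⌉₊ (seg Z n) (by simpa using hn)
      (by simpa using card_filter_blockCost_le hr0 hr1 hkraft hvr hk)
  have hceil := Nat.ceil_lt_add_one (show 0 ≤ k + v * n by positivity)
  have hcpx' : (cpx U (seg Z n) : ℝ) ≤ ⌈k + v * n⌉₊ + 3 * n.sqrt + c := mod_cast hcpx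
  rw [div_le_iff₀ (Nat.cast_pos.2 h0)] at hsqrt
  linarith

theorem MLAC.ae_tendsto_cpx_div (hμ : MLAC μ ρ) (hU : UniversalPlain U)
    (hρ : ComputableMeasure ρ) (herg : Ergodic shift ρ)
    (hs : Tendsto (entropyAt ρ) atTop (nhds s)) :
    ∀ᵐ Z ∂μ, Tendsto (fun n : ℕ => (cpx U (seg Z n) : ℝ) / n) atTop (nhds s) := by
  have hlower : ∀ᵐ Z ∂μ, ∀ t : ℚ, t < s → ∀ᶠ n : ℕ in atTop, (t * n : ℝ) ≤ cpx U (seg Z n) :=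
    ae_all_iff.2 fun t => eventually_imp_distrib_left.2 fun ht =>
      hμ.ae_eventually_mul_le_cpx hU hρ herg hs ht
  have hupper : ∀ᵐ Z ∂μ, ∀ u : ℚ, s < u → ∀ᶠ n : ℕ in atTop, (cpx U (seg Z n) : ℝ) ≤ u * n :=
    ae_all_iff.2 fun u => eventually_imp_distrib_left.2 fun hu =>
      hμ.ae_eventually_cpx_le_mul hU hρ herg hs hu
  filter_upwards [hlower, hupper] with Z hlo hup
  refine tendsto_order.2 ⟨fun a ha => ?_, fun b hb => ?_⟩
  · obtain ⟨t, hat, hts⟩ := exists_rat_btwn ha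
    filter_upwards [hlo t hts, eventually_gt_atTop 0] with n hn h0
    exact hat.trans_le ((le_div_iff₀ (Nat.cast_pos.2 h0)).2 hn)
  · obtain ⟨u, hsu, hub⟩ := exists_rat_btwn hb
    filter_upwards [hup u hsu, eventually_gt_atTop 0] with n hn h0
    exact ((div_le_iff₀ (Nat.cast_pos.2 h0)).2 hn).trans_lt hub

theorem avgCpx_eq_integral (U : BStr →. BStr) (μ : Measure Cantor) [IsProbabilityMeasure μ]
    (n : ℕ) : avgCpx U μ n = ∫ Z, (cpx U (seg Z n) : ℝ) ∂μ := by
  rw [integral_comp_seg μ fun x => (cpx U x : ℝ)]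
  exact sum_ofFn_eq_sum_words n fun x => (cpx U x : ℝ) * μ.real (cyl x)

theorem avgCpx_le_add [IsProbabilityMeasure μ] {V W : BStr →. BStr} {n : ℕ} {C : ℝ}
    (h : ∀ x : BStr, x.length = n → (cpx V x : ℝ) ≤ cpx W x + C) :
    avgCpx V μ n ≤ avgCpx W μ n + C := by
  have hint (V : BStr →. BStr) := integrable_comp_seg μ (fun x => (cpx V x : ℝ)) n
  rw [avgCpx_eq_integral, avgCpx_eq_integral]
  calc _ ≤ ∫ Z, (cpx W (seg Z n) + C : ℝ) ∂μ :=
        integral_mono (hint V) ((hint W).add (integrable_const C)) fun Z => h _ (length_seg Z n)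
    _ = _ := by rw [integral_add (hint W) (integrable_const C)]; simp

theorem UniversalPlain.tendsto_avgCpx_div [IsProbabilityMeasure μ] (hU : UniversalPlain U)
    (h : ∀ᵐ Z ∂μ, Tendsto (fun n : ℕ => (cpx U (seg Z n) : ℝ) / n) atTop (nhds s)) :
    Tendsto (fun n => avgCpx U μ n / (n : ℝ)) atTop (nhds s) := by
  obtain ⟨c, hc⟩ := hU.exists_cpx_le_length_add
  have hbound (n : ℕ) (Z : Cantor) : ‖(cpx U (seg Z n) : ℝ) / n‖ ≤ 1 + c := by
    rw [Real.norm_of_nonneg (by positivity)]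
    obtain rfl | h0 := n.eq_zero_or_pos
    · rw [Nat.cast_zero, div_zero]
      positivity
    have hcpx : cpx U (seg Z n) ≤ n + c := by simpa using hc (seg Z n)
    rw [div_le_iff₀ (Nat.cast_pos.2 h0)]
    exact_mod_cast hcpx.trans (by nlinarith)
  have hlim := tendsto_integral_of_dominated_convergence (fun _ => 1 + (c : ℝ))
    (fun n => (integrable_comp_seg μ (fun x => (cpx U x : ℝ) / n) n).aestronglyMeasurable)
    (integrable_const _) (fun n => ae_of_all _ (hbound n)) h
  simpa [avgCpx_eq_integral, integral_div] using hlim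

theorem UniversalPrefixFree.tendsto_avgCpx_div [IsProbabilityMeasure μ]
    (hUK : UniversalPrefixFree UK) (hU : UniversalPlain U)
    (h : Tendsto (fun n => avgCpx U μ n / (n : ℝ)) atTop (nhds s)) :
    Tendsto (fun n => avgCpx UK μ n / (n : ℝ)) atTop (nhds s) := by
  obtain ⟨a, ha⟩ := hU.exists_cpx_le_cpx_prefixFree hUK
  obtain ⟨b, hb⟩ := hUK.exists_cpx_le_add_sqrt hU
  obtain ⟨c, hc⟩ := hU.exists_cpx_le_length_add
  have hlower (n : ℕ) : avgCpx U μ n ≤ avgCpx UK μ n + a :=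
    avgCpx_le_add fun x _ => mod_cast ha x
  have hupper (n : ℕ) : avgCpx UK μ n ≤ avgCpx U μ n + (3 * n.sqrt + (3 * c + b)) := by
    refine avgCpx_le_add fun x hx => ?_
    have hsqrt : (cpx U x).sqrt ≤ n.sqrt + c := by
      refine (Nat.sqrt_le_sqrt (hx ▸ hc x)).trans (Nat.le_of_lt_succ (Nat.sqrt_lt.2 ?_))
      nlinarith [Nat.lt_succ_sqrt n]
    have := hb x
    exact_mod_cast (by lia : cpx UK x ≤ cpx U x + (3 * n.sqrt + (3 * c + b)))
  have hlo := h.sub (tendsto_const_div_atTop_nhds_zero_nat (a : ℝ))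
  have hhi := h.add (tendsto_three_mul_natSqrt_add_div (3 * c + b))
  rw [sub_zero] at hlo
  rw [add_zero] at hhi
  refine tendsto_of_tendsto_of_tendsto_of_le_of_le hlo hhi (fun n => ?_) fun n => ?_
  · simp only [← sub_div]
    gcongr
    linarith [hlower n]
  · simp only [← add_div]
    gcongr
    exact hupper n

end Convergence

/-- for a computable shift-invariant ergodic measure `ρ` with
entropy `H(ρ) = s` and any measure `μ ≪_ML ρ`, both `K(μ↾n)/n` and `C(μ↾n)/n`
converge to `H(ρ)`. -/
theorem avg_complexity_tendsto_entropy
    (U UK : BStr →. BStr) (hU : UniversalPlain U) (hUK : UniversalPrefixFree UK)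
    (ρ : Measure Cantor) [IsProbabilityMeasure ρ]
    (hcomp : ComputableMeasure ρ) (herg : Ergodic shift ρ)
    (s : ℝ) (hs : Tendsto (entropyAt ρ) atTop (nhds s))
    (μ : Measure Cantor) [IsProbabilityMeasure μ] (hml : MLAC μ ρ) :
    Tendsto (fun n => avgCpx UK μ n / (n : ℝ)) atTop (nhds s) ∧
    Tendsto (fun n => avgCpx U μ n / (n : ℝ)) atTop (nhds s) := by
  have hC : Tendsto (fun n => avgCpx U μ n / (n : ℝ)) atTop (nhds s) :=
    hU.tendsto_avgCpx_div (hml.ae_tendsto_cpx_div hU hcomp herg hs)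
  exact ⟨hUK.tendsto_avgCpx_div hU hC, hC⟩
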